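/- arXiv:1501.03627 — 6 statements merged into one kernel-verified Lean document; each statement's English description precedes it below -/
import Mathlib

section
/- If the parametrization q is k-times continuously differentiable for some k ≥ 2, then the double layer kernel extends smoothly across the diagonal: there exists a (k−2)-times continuously differentiable function k̃ : ℝ × ℝ → ℝ such that k̃(s,t) = ⟨q(s) − q(t), n(t)⟩/‖q(s) − q(t)‖² whenever q(s) ≠ q(t), and whose diagonal values are k̃(t,t) = (1/2)⟨q''(t), n(t)⟩. In particular, lim_{s→t} k(s,t) = (1/2)⟨q''(t), n(t)⟩ = −κ(t)/2, where κ(t) = −⟨q''(t), n(t)⟩ is the curvature of the curve at q(t). -/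
open Real Filter Topology MeasureTheory intervalIntegral

/-- The two-dimensional double layer kernel
`k(s,t) = ⟨q(s) − q(t), n(t)⟩ / ‖q(s) − q(t)‖²` with outward unit normal
`n(t) = (q'(t)₂, −q'(t)₁)`, written out in coordinates. -/
noncomputable def dlKernel (q : ℝ → EuclideanSpace ℝ (Fin 2)) (s t : ℝ) : ℝ :=
  ((q s 0 - q t 0) * deriv q t 1 - (q s 1 - q t 1) * deriv q t 0) / ‖q s - q t‖ ^ 2

/-- The diagonal value `(1/2)·⟨q''(t), n(t)⟩ = −κ(t)/2` of the continuously
extended double layer kernel. -/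
noncomputable def dlDiag (q : ℝ → EuclideanSpace ℝ (Fin 2)) (t : ℝ) : ℝ :=
  (1 / 2) * (deriv (deriv q) t 0 * deriv q t 1 - deriv (deriv q) t 1 * deriv q t 0)

/-!
Taylor's formula with integral remainder gives `q s - q t = (s - t) • A (s, t)`
and `q s - q t - (s - t) • q' t = (s - t) ^ 2 • B (s, t)`, where `A` and `B` are integrals over
`[0, 1]` depending as smoothly on `(s, t)` as `q'` and `q''` do. Since the normal annihilates
`q' t`, the factors `(s - t) ^ 2` cancel in the kernel and leave `⟪B, n t⟫ / ‖A‖ ^ 2`, which is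
smooth wherever `A ≠ 0`. This covers all `(s, t)` with `q s ≠ q t` as well as the diagonal, where
`A = q' ≠ 0`; the remaining coincidences `q s = q t` of a closed curve are translates of diagonal
points by a period.
-/

open Function
open scoped Nat RealInnerProductSpace

section ParametricIntegral

lemma exists_eventually_forall_norm_le {X Y E : Type*} [TopologicalSpace X] [TopologicalSpace Y]
    [SeminormedAddCommGroup E] {f : X → Y → E} (hf : Continuous (uncurry f)) {K : Set Y}
    (hK : IsCompact K) (x₀ : X) : ∃ C, ∀ᶠ x in 𝓝 x₀, ∀ y ∈ K, ‖f x y‖ ≤ C := by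
  obtain ⟨C, hC⟩ := hK.exists_bound_of_continuousOn (f := f x₀) (by fun_prop)
  refine ⟨C + 1, hK.eventually_forall_of_forall_eventually fun y hy ↦ ?_⟩
  exact hf.norm.continuousAt.eventually_le_const (lt_add_of_le_of_pos (hC y hy) one_pos)

variable {H E : Type*} [NormedAddCommGroup H] [NormedSpace ℝ H]
  [NormedAddCommGroup E] [NormedSpace ℝ E] {f : H → ℝ → E}

lemma contDiff_partial_fderiv {m n : WithTop ℕ∞} (hf : ContDiff ℝ n (uncurry f)) (hmn : m + 1 ≤ n) :
    ContDiff ℝ m (uncurry fun x u ↦ fderiv ℝ (f · u) x) :=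
  ContDiff.fderiv (f := fun p x ↦ f x p.2) (by fun_prop) contDiff_fst hmn

theorem hasFDerivAt_parametric_intervalIntegral (hf : ContDiff ℝ 1 (uncurry f)) (a b : ℝ)
    (x₀ : H) :
    HasFDerivAt (fun x ↦ ∫ u in a..b, f x u) (∫ u in a..b, fderiv ℝ (f · u) x₀) x₀ := by
  have hf' : Continuous (uncurry fun x u ↦ fderiv ℝ (f · u) x) :=
    (contDiff_partial_fderiv hf (m := 0) (by simp)).continuous
  have hfc : Continuous (uncurry f) := hf.continuous
  obtain ⟨C, hC⟩ := exists_eventually_forall_norm_le hf' (isCompact_uIcc (a := a) (b := b)) x₀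
  refine hasFDerivAt_integral_of_dominated_of_fderiv_le (bound := fun _ ↦ C)
    (F' := fun x u ↦ fderiv ℝ (f · u) x) hC
    (.of_forall fun x ↦ Continuous.aestronglyMeasurable (by fun_prop))
    (Continuous.intervalIntegrable (by fun_prop) _ _)
    (Continuous.aestronglyMeasurable (by fun_prop))
    (.of_forall fun u hu x hx ↦ hx u (Set.uIoc_subset_uIcc hu)) intervalIntegrable_const
    (.of_forall fun u _ x _ ↦ ?_)
  have hfu : Differentiable ℝ (f · u) := by fun_prop
  exact (hfu x).hasFDerivAt

theorem contDiff_parametric_intervalIntegral [FiniteDimensional ℝ H] {n : ℕ∞}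
    (hf : ContDiff ℝ n (uncurry f)) (a b : ℝ) : ContDiff ℝ n fun x ↦ ∫ u in a..b, f x u := by
  refine contDiff_iff_forall_nat_le.2 fun m hm ↦ ?_
  replace hf : ContDiff ℝ m (uncurry f) := hf.of_le (by exact_mod_cast hm)
  clear hm
  induction m generalizing f with
  | zero =>
    exact contDiff_zero.2 (continuous_parametric_intervalIntegral_of_continuous' hf.continuous a b)
  | succ m ih =>
    have hderiv := hasFDerivAt_parametric_intervalIntegral (hf.of_le (by norm_cast; lia)) a b
    have hf' : ContDiff ℝ m (uncurry fun x u ↦ fderiv ℝ (f · u) x) :=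
      contDiff_partial_fderiv hf (Nat.cast_succ m).ge
    rw [Nat.cast_succ, contDiff_succ_iff_fderiv_apply]
    refine ⟨fun x ↦ (hderiv x).differentiableAt, by simp, fun y ↦ ?_⟩
    have happly (x : H) : fderiv ℝ (fun x ↦ ∫ u in a..b, f x u) x y
        = ∫ u in a..b, fderiv ℝ (f · u) x y := by
      rw [(hderiv x).fderiv, ContinuousLinearMap.intervalIntegral_apply]
      exact (hf'.continuous.comp (Continuous.prodMk_right x)).intervalIntegrable a b
    simp only [happly]
    exact ih (hf'.clm_apply contDiff_const)

end ParametricIntegral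

section TaylorQuotient

variable {E : Type*} [NormedAddCommGroup E] [NormedSpace ℝ E] {f : ℝ → E}

lemma contDiff_iteratedDeriv {m : WithTop ℕ∞} (n : ℕ) (hf : ContDiff ℝ (m + n) f) :
    ContDiff ℝ m (iteratedDeriv n f) := by
  induction n generalizing f with
  | zero => simpa using hf
  | succ n ih =>
    rw [iteratedDeriv_succ']
    push_cast [← add_assoc] at hf
    exact ih (contDiff_succ_iff_deriv.1 hf).2.2

/-- The remainder of the Taylor expansion of `f` of order `n` at `p.2`, evaluated at `p.1` and
divided by `(p.1 - p.2) ^ (n + 1)`: the confluent divided difference `f[t, …, t, s]` at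
`p = (s, t)`. The integral form is meaningful also on the diagonal `s = t`. -/
noncomputable def taylorQuotient (f : ℝ → E) (n : ℕ) (p : ℝ × ℝ) : E :=
  (n ! : ℝ)⁻¹ •
    ∫ u in (0 : ℝ)..1, (1 - u) ^ n • iteratedDeriv (n + 1) f (p.2 + u * (p.1 - p.2))

theorem contDiff_taylorQuotient {m : ℕ∞} {n : ℕ} (hf : ContDiff ℝ (m + (n + 1 : ℕ)) f) :
    ContDiff ℝ m (taylorQuotient f n) := by
  have hderiv := contDiff_iteratedDeriv (n + 1) hf
  refine contDiff_const.smul (contDiff_parametric_intervalIntegral ?_ 0 1)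
  fun_prop

variable [CompleteSpace E]

theorem eq_sum_add_pow_smul_taylorQuotient {n : ℕ} (hf : ContDiff ℝ (n + 1) f) (s t : ℝ) :
    f s = ∑ k ∈ Finset.range (n + 1), ((k ! : ℝ)⁻¹ * (s - t) ^ k) • iteratedDeriv k f t
      + (s - t) ^ (n + 1) • taylorQuotient f n (s, t) := by
  have h := map_add_eq_sum_add_integral_iteratedFDeriv (f := f) (x := t) (y := s - t) (n := n)
    fun _ _ ↦ hf.contDiffAt
  simp only [iteratedFDeriv_apply_eq_iteratedDeriv_mul_prod, Finset.prod_const,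
    Finset.card_univ, Fintype.card_fin, smul_eq_mul, add_sub_cancel, smul_smul] at h
  rw [h, taylorQuotient]
  simp only [mul_comm _ ((s - t) ^ (n + 1)), mul_smul, intervalIntegral.integral_smul]
  simp only [smul_comm ((s - t) ^ (n + 1))]

theorem taylorQuotient_self (f : ℝ → E) (n : ℕ) (t : ℝ) :
    taylorQuotient f n (t, t) = ((n + 1)! : ℝ)⁻¹ • iteratedDeriv (n + 1) f t := by
  have hpow : ∫ u in (0 : ℝ)..1, (1 - u) ^ n = (n + 1 : ℝ)⁻¹ := by
    rw [intervalIntegral.integral_comp_sub_left (fun u ↦ u ^ n) 1]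
    simp
  simp [taylorQuotient, intervalIntegral.integral_smul_const, hpow, smul_smul, Nat.factorial_succ,
    mul_comm]

end TaylorQuotient

section DoubleLayer

variable {E : Type*} [NormedAddCommGroup E] [InnerProductSpace ℝ E] {q ν : ℝ → E}

/-- The double layer kernel of a curve `q` with respect to a vector field `ν` along `q`, normal to
`q` in the applications. It takes the junk value `0` where `q s = q t`. -/
noncomputable def doubleLayerKernel (q ν : ℝ → E) (s t : ℝ) : ℝ :=
  ⟪q s - q t, ν t⟫ / ‖q s - q t‖ ^ 2

/-- The limit of `doubleLayerKernel q ν` at the diagonal point `(t, t)`: half the normal component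
of the acceleration, normalized for a parametrization of arbitrary speed. -/
noncomputable def doubleLayerDiag (q ν : ℝ → E) (t : ℝ) : ℝ :=
  1 / 2 * ⟪deriv (deriv q) t, ν t⟫ / ‖deriv q t‖ ^ 2

open Classical in
/-- The double layer kernel with its singular values at coincidences `q s = q t` replaced by
`doubleLayerDiag`. For a closed curve these coincidences occur off the diagonal of `ℝ × ℝ` too. -/
noncomputable def doubleLayerExtension (q ν : ℝ → E) (s t : ℝ) : ℝ :=
  if q s = q t then doubleLayerDiag q ν t else doubleLayerKernel q ν s t

/-- The double layer kernel with the factor `(s - t) ^ 2` cancelled from numerator and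
denominator. -/
noncomputable def reducedDoubleLayerKernel (q ν : ℝ → E) (p : ℝ × ℝ) : ℝ :=
  ⟪taylorQuotient q 1 p, ν p.2⟫ / ‖taylorQuotient q 0 p‖ ^ 2

lemma doubleLayerExtension_of_ne {s t : ℝ} (h : q s ≠ q t) :
    doubleLayerExtension q ν s t = doubleLayerKernel q ν s t :=
  if_neg h

lemma doubleLayerExtension_of_eq {s t : ℝ} (h : q s = q t) :
    doubleLayerExtension q ν s t = doubleLayerDiag q ν t :=
  if_pos h

lemma doubleLayerExtension_congr_left {s s' t : ℝ} (h : q s = q s') :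
    doubleLayerExtension q ν s t = doubleLayerExtension q ν s' t := by
  rw [doubleLayerExtension, doubleLayerExtension, doubleLayerKernel, doubleLayerKernel, h]

lemma contDiffAt_reducedDoubleLayerKernel {m : ℕ∞} (hq : ContDiff ℝ (m + 2) q)
    (hν : ContDiff ℝ m ν) {p : ℝ × ℝ} (hp : taylorQuotient q 0 p ≠ 0) :
    ContDiffAt ℝ m (reducedDoubleLayerKernel q ν) p := by
  have hvel : ContDiff ℝ m (taylorQuotient q 0) :=
    contDiff_taylorQuotient (hq.of_le (by gcongr; norm_num))
  have hacc : ContDiff ℝ m (taylorQuotient q 1) := contDiff_taylorQuotient (mod_cast hq)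
  exact (hacc.inner ℝ (hν.comp contDiff_snd)).contDiffAt.div (hvel.norm_sq ℝ).contDiffAt
    (by simpa using hp)

variable [CompleteSpace E]

lemma taylorQuotient_zero_self (q : ℝ → E) (t : ℝ) : taylorQuotient q 0 (t, t) = deriv q t := by
  simp [taylorQuotient_self]

lemma sub_eq_smul_taylorQuotient_zero (hq : ContDiff ℝ 1 q) (s t : ℝ) :
    q s - q t = (s - t) • taylorQuotient q 0 (s, t) := by
  have h := eq_sum_add_pow_smul_taylorQuotient (n := 0) (by simpa using hq) s t
  simpa [sub_eq_iff_eq_add'] using h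

lemma taylorQuotient_zero_ne_zero (hq : ContDiff ℝ 1 q) {s t : ℝ} (h : q s ≠ q t) :
    taylorQuotient q 0 (s, t) ≠ 0 := fun h₀ ↦
  h (sub_eq_zero.1 (by rw [sub_eq_smul_taylorQuotient_zero hq, h₀, smul_zero]))

lemma eq_of_taylorQuotient_zero_ne_zero (hq : ContDiff ℝ 1 q) {s t : ℝ}
    (h : taylorQuotient q 0 (s, t) ≠ 0) (hst : q s = q t) : s = t := by
  have hsub := sub_eq_smul_taylorQuotient_zero hq s t
  rw [hst, sub_self, eq_comm, smul_eq_zero] at hsub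
  exact sub_eq_zero.1 (hsub.resolve_right h)

lemma inner_sub_eq_sq_mul_inner_taylorQuotient_one (hq : ContDiff ℝ 2 q) {v : E} {t : ℝ}
    (hv : ⟪deriv q t, v⟫ = 0) (s : ℝ) :
    ⟪q s - q t, v⟫ = (s - t) ^ 2 * ⟪taylorQuotient q 1 (s, t), v⟫ := by
  have h := eq_sum_add_pow_smul_taylorQuotient (n := 1)
    (by simpa [one_add_one_eq_two] using hq) s t
  rw [h]
  simp [Finset.sum_range_succ, inner_add_left, inner_sub_left, real_inner_smul_left, hv]

theorem doubleLayerKernel_eq_reducedDoubleLayerKernel (hq : ContDiff ℝ 2 q) {s t : ℝ}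
    (hν : ⟪deriv q t, ν t⟫ = 0) (hst : s ≠ t) :
    doubleLayerKernel q ν s t = reducedDoubleLayerKernel q ν (s, t) := by
  rw [doubleLayerKernel, reducedDoubleLayerKernel,
    inner_sub_eq_sq_mul_inner_taylorQuotient_one hq hν,
    sub_eq_smul_taylorQuotient_zero (hq.of_le one_le_two), norm_smul, mul_pow, Real.norm_eq_abs,
    sq_abs, mul_div_mul_left _ _ (pow_ne_zero 2 (sub_ne_zero.2 hst))]

theorem reducedDoubleLayerKernel_self (q ν : ℝ → E) (t : ℝ) :
    reducedDoubleLayerKernel q ν (t, t) = doubleLayerDiag q ν t := by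
  simp [reducedDoubleLayerKernel, doubleLayerDiag, taylorQuotient_self, iteratedDeriv_succ,
    real_inner_smul_left]

lemma doubleLayerExtension_eq_reducedDoubleLayerKernel (hq : ContDiff ℝ 2 q)
    (hν : ∀ t, ⟪deriv q t, ν t⟫ = 0) {s t : ℝ} (h : taylorQuotient q 0 (s, t) ≠ 0) :
    doubleLayerExtension q ν s t = reducedDoubleLayerKernel q ν (s, t) := by
  by_cases hst : q s = q t
  · obtain rfl := eq_of_taylorQuotient_zero_ne_zero (hq.of_le one_le_two) h hst
    rw [doubleLayerExtension_of_eq rfl, reducedDoubleLayerKernel_self]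
  · rw [doubleLayerExtension_of_ne hst,
      doubleLayerKernel_eq_reducedDoubleLayerKernel hq (hν t) (ne_of_apply_ne q hst)]

lemma contDiffAt_doubleLayerExtension {m : ℕ∞} (hq : ContDiff ℝ (m + 2) q)
    (hν : ContDiff ℝ m ν) (hperp : ∀ t, ⟪deriv q t, ν t⟫ = 0) {p : ℝ × ℝ}
    (hp : taylorQuotient q 0 p ≠ 0) :
    ContDiffAt ℝ m (uncurry (doubleLayerExtension q ν)) p := by
  have hq2 : ContDiff ℝ 2 q := hq.of_le le_add_self
  have hvel : Continuous (taylorQuotient q 0) :=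
    (contDiff_taylorQuotient (m := 0) (hq2.of_le (by norm_num))).continuous
  refine (contDiffAt_reducedDoubleLayerKernel hq hν hp).congr_of_eventuallyEq ?_
  filter_upwards [hvel.continuousAt.eventually_ne hp] with r hr
  exact doubleLayerExtension_eq_reducedDoubleLayerKernel hq2 hperp hr

theorem contDiff_doubleLayerExtension {m : ℕ∞} (hq : ContDiff ℝ (m + 2) q)
    (hν : ContDiff ℝ m ν) (hperp : ∀ t, ⟪deriv q t, ν t⟫ = 0) (hreg : ∀ t, deriv q t ≠ 0)
    (hsimple : ∀ s t, q s = q t → Periodic q (s - t)) :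
    ContDiff ℝ m (uncurry (doubleLayerExtension q ν)) := by
  refine contDiff_iff_contDiffAt.2 fun ⟨s, t⟩ ↦ ?_
  by_cases hst : q s = q t
  · have hdiag : ContDiffAt ℝ m (uncurry (doubleLayerExtension q ν)) (s - (s - t), t) :=
      contDiffAt_doubleLayerExtension hq hν hperp (by simpa [taylorQuotient_zero_self] using hreg t)
    have hshift : uncurry (doubleLayerExtension q ν)
        = uncurry (doubleLayerExtension q ν) ∘ fun p : ℝ × ℝ ↦ (p.1 - (s - t), p.2) :=
      funext fun p ↦ doubleLayerExtension_congr_left ((hsimple s t hst).sub_eq p.1).symm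
    rw [hshift]
    exact hdiag.comp (s, t) (by fun_prop)
  · exact contDiffAt_doubleLayerExtension hq hν hperp
      (taylorQuotient_zero_ne_zero (hq.of_le (one_le_two.trans le_add_self)) hst)

theorem tendsto_doubleLayerKernel (hq : ContDiff ℝ 2 q) (hν : Continuous ν) {t : ℝ}
    (hperp : ⟪deriv q t, ν t⟫ = 0) (hreg : deriv q t ≠ 0) :
    Tendsto (fun s ↦ doubleLayerKernel q ν s t) (𝓝[≠] t) (𝓝 (doubleLayerDiag q ν t)) := by
  have hcont : ContinuousAt (fun s ↦ reducedDoubleLayerKernel q ν (s, t)) t :=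
    (contDiffAt_reducedDoubleLayerKernel (m := 0) (by simpa using hq) (contDiff_zero.2 hν)
      (by rwa [taylorQuotient_zero_self])).continuousAt.comp (by fun_prop)
  rw [← reducedDoubleLayerKernel_self]
  refine (hcont.tendsto.mono_left nhdsWithin_le_nhds).congr' ?_
  filter_upwards [self_mem_nhdsWithin] with s hs
  exact (doubleLayerKernel_eq_reducedDoubleLayerKernel hq hperp hs).symm

theorem double_layer_kernel_smooth_extension_general {m : ℕ∞} (hq : ContDiff ℝ (m + 2) q)
    (hν : ContDiff ℝ m ν) (hperp : ∀ t, ⟪deriv q t, ν t⟫ = 0) (hreg : ∀ t, deriv q t ≠ 0)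
    (hsimple : ∀ s t, q s = q t → Periodic q (s - t)) :
    ∃ ktil : ℝ → ℝ → ℝ,
      ContDiff ℝ m (fun p : ℝ × ℝ ↦ ktil p.1 p.2) ∧
      (∀ s t, q s ≠ q t → ktil s t = doubleLayerKernel q ν s t) ∧
      (∀ t, ktil t t = doubleLayerDiag q ν t) ∧
      (∀ t, Tendsto (fun s ↦ doubleLayerKernel q ν s t) (𝓝[≠] t) (𝓝 (doubleLayerDiag q ν t))) :=
  ⟨doubleLayerExtension q ν, contDiff_doubleLayerExtension hq hν hperp hreg hsimple,
    fun _ _ ↦ doubleLayerExtension_of_ne, fun _ ↦ doubleLayerExtension_of_eq rfl,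
    fun t ↦ tendsto_doubleLayerKernel (hq.of_le le_add_self) hν.continuous (hperp t) (hreg t)⟩

end DoubleLayer

lemma periodic_sub_of_injOn_Ico {G α : Type*} [AddCommGroup G] [LinearOrder G]
    [IsOrderedAddMonoid G] [Archimedean G] {f : G → α} {a L : G} (hL : 0 < L)
    (hf : Periodic f L) (hinj : Set.InjOn f (Set.Ico a (a + L))) {s t : G} (h : f s = f t) :
    Periodic f (s - t) := by
  have hmod (x : G) : f (toIcoMod hL a x) = f x := hf.sub_zsmul_eq _
  have hst : toIcoMod hL a s = toIcoMod hL a t :=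
    hinj (toIcoMod_mem_Ico hL a s) (toIcoMod_mem_Ico hL a t) (by rw [hmod, hmod, h])
  obtain ⟨n, hn⟩ := (toIcoMod_eq_toIcoMod hL).1 hst
  rw [← neg_sub, hn]
  exact (hf.zsmul n).neg

section PlaneCurve

/-- The velocity of the plane curve `q` rotated clockwise by a right angle: the outward unit normal
when `q` is a positively oriented unit-speed closed curve. -/
noncomputable def clockwiseNormal (q : ℝ → EuclideanSpace ℝ (Fin 2)) (t : ℝ) :
    EuclideanSpace ℝ (Fin 2) :=
  !₂[deriv q t 1, -deriv q t 0]

variable {q : ℝ → EuclideanSpace ℝ (Fin 2)}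

lemma inner_clockwiseNormal (v : EuclideanSpace ℝ (Fin 2)) (t : ℝ) :
    ⟪v, clockwiseNormal q t⟫ = v 0 * deriv q t 1 - v 1 * deriv q t 0 := by
  simp [clockwiseNormal, PiLp.inner_apply, Fin.sum_univ_two]
  ring

lemma inner_deriv_clockwiseNormal (t : ℝ) : ⟪deriv q t, clockwiseNormal q t⟫ = 0 := by
  rw [inner_clockwiseNormal, mul_comm, sub_self]

lemma contDiff_clockwiseNormal {m : WithTop ℕ∞} (hq : ContDiff ℝ (m + 1) q) :
    ContDiff ℝ m (clockwiseNormal q) := by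
  have hderiv (i : Fin 2) : ContDiff ℝ m fun t ↦ deriv q t i :=
    contDiff_euclidean.1 (contDiff_succ_iff_deriv.1 hq).2.2 i
  refine contDiff_euclidean.2 fun i ↦ ?_
  fin_cases i
  exacts [hderiv 1, (hderiv 0).neg]

lemma doubleLayerKernel_clockwiseNormal (q : ℝ → EuclideanSpace ℝ (Fin 2)) :
    doubleLayerKernel q (clockwiseNormal q) = dlKernel q := by
  ext s t
  simp only [doubleLayerKernel, dlKernel, inner_clockwiseNormal, PiLp.sub_apply]

lemma doubleLayerDiag_clockwiseNormal (hunit : ∀ t, ‖deriv q t‖ = 1) :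
    doubleLayerDiag q (clockwiseNormal q) = dlDiag q := by
  ext t
  simp only [doubleLayerDiag, dlDiag, inner_clockwiseNormal, hunit, one_pow, div_one]

end PlaneCurve

/-- If the parametrization `q` is `Cᵏ` for some `k ≥ 2`, the double layer kernel extends to a
`C^(k−2)` function `k̃` on `ℝ × ℝ` agreeing with `⟨q(s)−q(t), n(t)⟩/‖q(s)−q(t)‖²` off the
diagonal and with diagonal values `k̃(t,t) = (1/2)⟨q''(t), n(t)⟩`; in particular
`k(s,t) → (1/2)⟨q''(t), n(t)⟩ = −κ(t)/2` as `s → t`. -/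
theorem double_layer_kernel_smooth_extension
    (L : ℝ) (hL : 0 < L) (k : ℕ) (hk : 2 ≤ k)
    (q : ℝ → EuclideanSpace ℝ (Fin 2))
    (hq : ContDiff ℝ k q)
    (hper : ∀ s, q (s + L) = q s)
    (hunit : ∀ s, ‖deriv q s‖ = 1)
    (hinj : Set.InjOn q (Set.Ico 0 L)) :
    ∃ ktil : ℝ → ℝ → ℝ,
      ContDiff ℝ (k - 2 : ℕ) (fun p : ℝ × ℝ => ktil p.1 p.2) ∧
      (∀ s t, q s ≠ q t → ktil s t = dlKernel q s t) ∧
      (∀ t, ktil t t = dlDiag q t) ∧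
      (∀ t : ℝ, Tendsto (fun s => dlKernel q s t) (𝓝[≠] t) (𝓝 (dlDiag q t))) := by
  obtain ⟨m, rfl⟩ := Nat.exists_eq_add_of_le' hk
  have hreg (t : ℝ) : deriv q t ≠ 0 := norm_ne_zero_iff.1 (by simp [hunit])
  have hsimple (s t : ℝ) : q s = q t → Periodic q (s - t) :=
    periodic_sub_of_injOn_Ico hL hper (by rwa [zero_add])
  have hnormal : ContDiff ℝ m (clockwiseNormal q) :=
    contDiff_clockwiseNormal (hq.of_le (by norm_cast; lia))
  rw [← doubleLayerKernel_clockwiseNormal, ← doubleLayerDiag_clockwiseNormal hunit]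
  exact double_layer_kernel_smooth_extension_general (m := m) (by exact_mod_cast hq) hnormal
    inner_deriv_clockwiseNormal hreg hsimple
end

section
/- The double layer potential of the constant function 1 equals −1 on the boundary: for every s ∈ ℝ, (1/π) ∫₀^L k(s,t) dt = −1, where the integral is understood using the continuous extension of the kernel k across the diagonal. -/
open Real Filter Topology MeasureTheory intervalIntegral

/-!
In the complex plane, minus the double layer kernel is the speed at which the direction from `z s`
to `z t` rotates as `t` varies. During one turn of `t` around the loop, this direction goes from the
tangent at `z s` to its opposite, so the total rotation is `π` modulo `2π`; being continuous in `s`,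
it is constant. On the other hand, for fixed `h` the chord from `z u` to `z (u + h)` closes up as
`u` runs over a period, so its total rotation is a multiple of `2π`; being continuous in `h`, it
keeps its value at `h = 0`, which is minus twice the integral of the kernel along the diagonal.
Averaged over `h`, the rotation of the chord is also minus twice the double layer potential, so this
potential equals the integral along the diagonal, which is minus half the total curvature.
-/

section Rotation

variable {f f' : ℝ → ℂ} {a b : ℝ}

lemma eq_exp_integral_mul_of_hasDerivWithinAt_mul {g : ℝ → ℂ} (hab : a ≤ b)
    (hg : ContinuousOn g (Set.Icc a b))
    (hf : ∀ t ∈ Set.Icc a b, HasDerivWithinAt f (g t * f t) (Set.Icc a b) t) :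
    f b = Complex.exp (∫ t in a..b, g t) * f a := by
  set G : ℝ → ℂ := Set.IccExtend hab ((Set.Icc a b).domRestrict g)
  have hG : Continuous G := hg.domRestrict.Icc_extend'
  have hGg : ∀ t ∈ Set.Icc a b, G t = g t := fun t ht => Set.IccExtend_of_mem hab _ ht
  let P : ℝ → ℂ := fun x => ∫ t in a..x, G t
  have hderiv : ∀ t ∈ Set.Icc a b,
      HasDerivWithinAt (fun x => Complex.exp (-P x) * f x) 0 (Set.Icc a b) t := by
    intro t ht
    have hP : HasDerivAt P (G t) t := (hG.integral_hasStrictDerivAt a t).hasDerivAt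
    refine (hP.neg.cexp.hasDerivWithinAt.mul (hf t ht)).congr_deriv ?_
    rw [hGg t ht]
    ring
  have hconst : Complex.exp (-P b) * f b = Complex.exp (-P a) * f a :=
    constant_of_derivWithin_zero (fun t ht => (hderiv t ht).differentiableWithinAt)
      (fun t ht => (hderiv t (Set.Ico_subset_Icc_self ht)).derivWithin
        (uniqueDiffOn_Icc (ht.1.trans_lt ht.2) t (Set.Ico_subset_Icc_self ht)))
      b (Set.right_mem_Icc.2 hab)
  have hPa : P a = 0 := intervalIntegral.integral_same
  have hPb : P b = ∫ t in a..b, g t :=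
    intervalIntegral.integral_congr fun t ht => hGg t (Set.uIcc_of_le hab ▸ ht)
  rw [← hPb, ← one_mul (f b), ← Complex.exp_zero, ← add_neg_cancel (P b), Complex.exp_add,
    mul_assoc, hconst, hPa, neg_zero, Complex.exp_zero, one_mul]

lemma coe_integral_im_div_eq_arg (hab : a ≤ b)
    (hf : ∀ t ∈ Set.Icc a b, HasDerivWithinAt f (f' t) (Set.Icc a b) t)
    (hf' : ContinuousOn f' (Set.Icc a b)) (hne : ∀ t ∈ Set.Icc a b, f t ≠ 0) :
    ((∫ t in a..b, (f' t / f t).im : ℝ) : Real.Angle) = Complex.arg (f b / f a) := by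
  have hcont : ContinuousOn (fun t => f' t / f t) (Set.Icc a b) :=
    hf'.div (fun t ht => (hf t ht).continuousWithinAt) hne
  have hexp : f b / f a = Complex.exp (∫ t in a..b, f' t / f t) :=
    (div_eq_iff (hne a (Set.left_mem_Icc.2 hab))).2 <|
      eq_exp_integral_mul_of_hasDerivWithinAt_mul hab hcont fun t ht =>
        (hf t ht).congr_deriv (div_mul_cancel₀ _ (hne t ht)).symm
  have him : ∫ t in a..b, (f' t / f t).im = (∫ t in a..b, f' t / f t).im :=
    Complex.imCLM.intervalIntegral_comp_comm (hcont.intervalIntegrable_of_Icc hab)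
  rw [hexp, Complex.arg_exp, Real.Angle.coe_toIocMod, him]

lemma tendsto_sub_div_sub_neg_one {f' : ℂ} {x : ℝ} (hf : HasDerivAt f f' x) (hf' : f' ≠ 0) :
    Tendsto (fun ε => (f (x - ε) - f x) / (f (x + ε) - f x)) (𝓝[≠] 0) (𝓝 (-1)) := by
  have hright : Tendsto (fun ε : ℝ => ε⁻¹ • (f (x + ε) - f x)) (𝓝[≠] 0) (𝓝 f') :=
    hf.tendsto_slope_zero
  have hleft : Tendsto (fun ε : ℝ => ε⁻¹ • (f (x - ε) - f x)) (𝓝[≠] 0) (𝓝 (-f')) := by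
    have hf_sub : HasDerivAt (fun ε => f (x - ε)) (-f') 0 :=
      HasDerivAt.comp_const_sub x 0 (by rwa [sub_zero])
    simpa using hf_sub.tendsto_slope_zero
  have hratio := hleft.div hright hf'
  rw [neg_div, div_self hf'] at hratio
  refine hratio.congr' ?_
  filter_upwards [self_mem_nhdsWithin] with ε (hε : ε ≠ 0)
  have hε' : ((ε⁻¹ : ℝ) : ℂ) ≠ 0 := Complex.ofReal_ne_zero.2 (inv_ne_zero hε)
  simp only [Pi.div_apply, Complex.real_smul, mul_div_mul_left _ _ hε']

lemma eq_of_coe_angle_eq {X : Type*} [TopologicalSpace X] {g : X → ℝ} {S : Set X}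
    (hS : IsPreconnected S) (hg : ContinuousOn g S) {θ : Real.Angle}
    (hθ : ∀ x ∈ S, (g x : Real.Angle) = θ) {x y : X} (hx : x ∈ S) (hy : y ∈ S) : g x = g y :=
  (AddCircle.isCoveringMap_coe (2 * π)).constOn_of_comp hS hg
    (fun x hx y hy => (hθ x hx).trans (hθ y hy).symm) hx hy

end Rotation

section Averaging

lemma continuous_uncurry_add_swap {M : Type*} [TopologicalSpace M] [Add M] [ContinuousAdd M]
    {F : ℝ → ℝ → M} (hF : Continuous F.uncurry) :
    Continuous (Function.uncurry fun h u => F u (u + h) + F (u + h) u) :=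
  (hF.comp (by fun_prop : Continuous fun p : ℝ × ℝ => (p.2, p.2 + p.1))).add
    (hF.comp (by fun_prop : Continuous fun p : ℝ × ℝ => (p.2 + p.1, p.2)))

variable {E : Type*} [NormedAddCommGroup E] [NormedSpace ℝ E] {F : ℝ → ℝ → E}

lemma integral_integral_swap_of_continuous (hF : Continuous F.uncurry) (a b c d : ℝ) :
    ∫ x in a..b, ∫ y in c..d, F x y = ∫ y in c..d, ∫ x in a..b, F x y :=
  intervalIntegral_intervalIntegral_swap <|
    (hF.continuousOn.integrableOn_compact (isCompact_uIcc.prod isCompact_uIcc)).mono_set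
      (Set.prod_mono Set.uIoc_subset_uIcc Set.uIoc_subset_uIcc)

lemma integral_comp_const_add_of_periodic {g : ℝ → E} {L : ℝ} (hg : Function.Periodic g L)
    (u : ℝ) :
    ∫ h in (0 : ℝ)..L, g (u + h) = ∫ t in (0 : ℝ)..L, g t := by
  rw [intervalIntegral.integral_comp_add_left, add_zero, hg.intervalIntegral_add_eq u 0, zero_add]

/-- The lines `{(u, u + h) | u}`, for `h` in a period, sweep out a torus once. -/
lemma integral_integral_add_swap_of_periodic (hF : Continuous F.uncurry) {L : ℝ}
    (hright : ∀ s, Function.Periodic (F s) L) (hleft : ∀ t, Function.Periodic (fun s => F s t) L) :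
    ∫ h in (0 : ℝ)..L, ∫ u in (0 : ℝ)..L, (F u (u + h) + F (u + h) u) =
      (2 : ℝ) • ∫ s in (0 : ℝ)..L, ∫ t in (0 : ℝ)..L, F s t := by
  have hF' : Continuous (Function.uncurry fun t s => F s t) := hF.comp continuous_swap
  have hinner (u : ℝ) : ∫ h in (0 : ℝ)..L, (F u (u + h) + F (u + h) u) =
      (∫ t in (0 : ℝ)..L, F u t) + ∫ s in (0 : ℝ)..L, F s u := by
    have hcont_right : Continuous fun h => F u (u + h) :=
      hF.comp (by fun_prop : Continuous fun h : ℝ => (u, u + h))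
    have hcont_left : Continuous fun h => F (u + h) u :=
      hF.comp (by fun_prop : Continuous fun h : ℝ => (u + h, u))
    rw [intervalIntegral.integral_add (hcont_right.intervalIntegrable 0 L)
      (hcont_left.intervalIntegrable 0 L), integral_comp_const_add_of_periodic (hright u),
      integral_comp_const_add_of_periodic (hleft u)]
  have hint {G : ℝ → ℝ → E} (hG : Continuous G.uncurry) :
      IntervalIntegrable (fun u => ∫ t in (0 : ℝ)..L, G u t) volume 0 L :=
    Continuous.intervalIntegrable
      (intervalIntegral.continuous_parametric_intervalIntegral_of_continuous' hG 0 L) 0 L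
  rw [integral_integral_swap_of_continuous (continuous_uncurry_add_swap hF)]
  simp_rw [hinner]
  rw [intervalIntegral.integral_add (hint hF) (hint hF'), integral_integral_swap_of_continuous hF',
    two_smul]

end Averaging

/-- A simple closed curve, parametrized with period `L` and without self-intersections within one
period. -/
structure IsSimpleLoop {E : Type*} (L : ℝ) (z : ℝ → E) : Prop where
  pos : 0 < L
  periodic : Function.Periodic z L
  injOn : Set.InjOn z (Set.Ico 0 L)

namespace IsSimpleLoop

variable {E E' : Type*} {L : ℝ} {z : ℝ → E}

lemma comp_injective (hz : IsSimpleLoop L z) {φ : E → E'} (hφ : Function.Injective φ) :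
    IsSimpleLoop L (φ ∘ z) :=
  ⟨hz.pos, hz.periodic.comp φ, hφ.comp_injOn hz.injOn⟩

lemma modEq_of_eq (hz : IsSimpleLoop L z) {s t : ℝ} (h : z s = z t) : s ≡ t [PMOD L] := by
  have hmod : ∀ x, z (toIcoMod hz.pos 0 x) = z x := fun x => hz.periodic.sub_zsmul_eq _
  refine (toIcoMod_inj hz.pos (c := 0)).1 (hz.injOn ?_ ?_ (by rw [hmod, hmod, h]))
  all_goals simpa only [zero_add] using toIcoMod_mem_Ico hz.pos 0 _

lemma ne_of_mem_Ioo (hz : IsSimpleLoop L z) {s t : ℝ} (ht : t ∈ Set.Ioo s (s + L)) : z t ≠ z s :=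
  fun h => (AddCommGroup.modEq_iff_forall_notMem_Ioo_mod hz.pos).1 (hz.modEq_of_eq h.symm) 0
    (by simpa using ht)

lemma dense_setOf_ne (hz : IsSimpleLoop L z) (s : ℝ) : Dense {t | z t ≠ z s} := by
  have hcount : (Set.range fun n : ℤ => s + n • L).Countable := Set.countable_range _
  refine Dense.mono (fun t ht h => ?_) (hcount.dense_compl ℝ)
  obtain ⟨n, hn⟩ := AddCommGroup.modEq_iff_eq_add_zsmul.1 (hz.modEq_of_eq h.symm)
  exact ht ⟨n, hn.symm⟩

lemma dense_setOf_deriv_ne_zero [NormedAddCommGroup E] [NormedSpace ℝ E] (hz : IsSimpleLoop L z)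
    (hd : Differentiable ℝ z) : Dense {t | deriv z t ≠ 0} := by
  refine Metric.dense_iff.2 fun x r hr => ?_
  by_contra! hempty
  have hderiv : Set.EqOn (deriv z) 0 (Metric.ball x r) := fun t ht =>
    not_not.1 fun h => (hempty.subset ⟨ht, h⟩ : t ∈ (∅ : Set ℝ))
  obtain ⟨y, hy, hne⟩ := Metric.dense_iff.1 (hz.dense_setOf_ne x) x r hr
  exact hne (Metric.isOpen_ball.is_const_of_deriv_eq_zero (convex_ball x r).isPreconnected
    hd.differentiableOn hderiv hy (Metric.mem_ball_self hr))

end IsSimpleLoop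

/-- The rate at which the direction from `z s` to the moving point `z t` rotates; this is minus the
double layer kernel, and it takes the junk value `0` where `z t = z s`. -/
noncomputable def angularSpeed (z : ℝ → ℂ) (s t : ℝ) : ℝ :=
  (deriv z t / (z t - z s)).im

/-- `K` extends the angular speed of `z` continuously to all pairs of parameters, in particular
across the diagonal. -/
structure IsAngularSpeedExtension (z : ℝ → ℂ) (K : ℝ → ℝ → ℝ) : Prop where
  continuous : Continuous K.uncurry
  eq_of_ne : ∀ {s t}, z t ≠ z s → K s t = angularSpeed z s t

namespace IsAngularSpeedExtension

variable {L : ℝ} {z : ℝ → ℂ} {K : ℝ → ℝ → ℝ}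

lemma continuous_right (hK : IsAngularSpeedExtension z K) (s : ℝ) : Continuous (K s) :=
  hK.continuous.uncurry_left s

lemma continuous_left (hK : IsAngularSpeedExtension z K) (t : ℝ) : Continuous fun s => K s t :=
  hK.continuous.uncurry_right t

lemma periodic_right (hK : IsAngularSpeedExtension z K) (hz : IsSimpleLoop L z) (s : ℝ) :
    Function.Periodic (K s) L := by
  refine congrFun (((hK.continuous_right s).comp (continuous_add_const L)).ext_on
    (hz.dense_setOf_ne s) (hK.continuous_right s) fun t (ht : z t ≠ z s) => ?_)
  have hderiv : deriv z (t + L) = deriv z t := by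
    rw [← deriv_comp_add_const, hz.periodic.funext]
  rw [Function.comp_apply, hK.eq_of_ne ht, hK.eq_of_ne (by rwa [hz.periodic]), angularSpeed,
    angularSpeed, hz.periodic, hderiv]

lemma periodic_left (hK : IsAngularSpeedExtension z K) (hz : IsSimpleLoop L z) (t : ℝ) :
    Function.Periodic (fun s => K s t) L := by
  refine congrFun (((hK.continuous_left t).comp (continuous_add_const L)).ext_on
    (hz.dense_setOf_ne t) (hK.continuous_left t) fun s (hs : z s ≠ z t) => ?_)
  rw [Function.comp_apply, hK.eq_of_ne hs.symm, hK.eq_of_ne (by rw [hz.periodic]; exact hs.symm),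
    angularSpeed, angularSpeed, hz.periodic]

lemma coe_integral_of_Icc_subset (hK : IsAngularSpeedExtension z K) (hz : IsSimpleLoop L z)
    (hd : ContDiff ℝ 1 z) {s a b : ℝ} (hab : a ≤ b) (hsub : Set.Icc a b ⊆ Set.Ioo s (s + L)) :
    ((∫ t in a..b, K s t : ℝ) : Real.Angle) = Complex.arg ((z b - z s) / (z a - z s)) := by
  have hne : ∀ t ∈ Set.Icc a b, z t ≠ z s := fun t ht => hz.ne_of_mem_Ioo (hsub ht)
  rw [← coe_integral_im_div_eq_arg (f := fun t => z t - z s) (f' := deriv z) hab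
    (fun t _ => ((hd.differentiable one_ne_zero t).hasDerivAt.sub_const _).hasDerivWithinAt)
    (hd.continuous_deriv_one.continuousOn) fun t ht => sub_ne_zero.2 (hne t ht)]
  congr 1
  refine intervalIntegral.integral_congr fun t ht => hK.eq_of_ne (hne t ?_)
  rwa [Set.uIcc_of_le hab] at ht

/-- As `t` runs once around the loop, the direction from `z s` to `z t` turns from the tangent
direction to its opposite. -/
lemma coe_integral_eq_pi_of_deriv_ne_zero (hK : IsAngularSpeedExtension z K)
    (hz : IsSimpleLoop L z) (hd : ContDiff ℝ 1 z) {s : ℝ} (hs : deriv z s ≠ 0) :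
    ((∫ t in (0 : ℝ)..L, K s t : ℝ) : Real.Angle) = π := by
  have hint : ∀ a b, IntervalIntegrable (K s) volume a b :=
    (hK.continuous_right s).intervalIntegrable
  have hangle : ∀ᶠ ε in 𝓝[>] (0 : ℝ),
      ((∫ t in (s + ε)..(s + L - ε), K s t : ℝ) : Real.Angle) =
        Complex.arg ((z (s - ε) - z s) / (z (s + ε) - z s)) := by
    filter_upwards [Ioo_mem_nhdsGT (half_pos hz.pos)] with ε ⟨hε, hεL⟩
    rw [hK.coe_integral_of_Icc_subset hz hd (by linarith)
      (Set.Icc_subset_Ioo (by linarith) (by linarith)), add_sub_right_comm, hz.periodic]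
  have hlim_arg : Tendsto (fun ε => (Complex.arg ((z (s - ε) - z s) / (z (s + ε) - z s)) :
      Real.Angle)) (𝓝[>] 0) (𝓝 π) := by
    have h := (Complex.continuousAt_arg_coe_angle (neg_ne_zero.2 one_ne_zero)).tendsto.comp
      ((tendsto_sub_div_sub_neg_one (hd.differentiable one_ne_zero s).hasDerivAt hs).mono_left
        (nhdsGT_le_nhdsNE 0))
    rwa [Function.comp_apply, Complex.arg_neg_one] at h
  have hlim_integral : Tendsto (fun ε => ((∫ t in (s + ε)..(s + L - ε), K s t : ℝ) : Real.Angle))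
      (𝓝[>] 0) (𝓝 (∫ t in (0 : ℝ)..L, K s t : ℝ)) := by
    have hcont : Continuous fun ε =>
        (∫ t in s..(s + L - ε), K s t) - ∫ t in s..(s + ε), K s t :=
      ((intervalIntegral.continuous_primitive hint s).comp (by fun_prop)).sub
        ((intervalIntegral.continuous_primitive hint s).comp (by fun_prop))
    have h := (Real.Angle.continuous_coe.comp hcont).tendsto 0 |>.mono_left
      (nhdsWithin_le_nhds (s := Set.Ioi 0))
    simpa [Function.comp_def, intervalIntegral.integral_interval_sub_left, hint,
      (hK.periodic_right hz s).intervalIntegral_add_eq s 0] using h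
  exact tendsto_nhds_unique hlim_integral (hlim_arg.congr' (hangle.mono fun ε h => h.symm))

lemma integral_eq_integral (hK : IsAngularSpeedExtension z K) (hz : IsSimpleLoop L z)
    (hd : ContDiff ℝ 1 z) (s s' : ℝ) :
    ∫ t in (0 : ℝ)..L, K s t = ∫ t in (0 : ℝ)..L, K s' t := by
  have hcont : Continuous fun s => ∫ t in (0 : ℝ)..L, K s t :=
    intervalIntegral.continuous_parametric_intervalIntegral_of_continuous' hK.continuous 0 L
  have hpi := (Real.Angle.continuous_coe.comp hcont).ext_on
    (hz.dense_setOf_deriv_ne_zero (hd.differentiable one_ne_zero)) continuous_const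
    fun s => hK.coe_integral_eq_pi_of_deriv_ne_zero hz hd
  exact eq_of_coe_angle_eq isPreconnected_univ hcont.continuousOn (fun s _ => congrFun hpi s)
    (Set.mem_univ s) (Set.mem_univ s')

/-- The chord from `z u` to `z (u + h)` returns to its initial position as `u` runs over a
period. -/
lemma coe_integral_chord_eq_zero (hK : IsAngularSpeedExtension z K) (hz : IsSimpleLoop L z)
    (hd : ContDiff ℝ 1 z) {h : ℝ} (hh : h ∈ Set.Ioo 0 L) :
    ((∫ u in (0 : ℝ)..L, (K u (u + h) + K (u + h) u) : ℝ) : Real.Angle) = 0 := by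
  have hne : ∀ u, z (u + h) ≠ z u := fun u =>
    hz.ne_of_mem_Ioo ⟨lt_add_of_pos_right u hh.1, add_lt_add_right hh.2 u⟩
  have hderiv : ∀ t, HasDerivAt z (deriv z t) t := fun t =>
    (hd.differentiable one_ne_zero t).hasDerivAt
  have hspeed : ∀ u, K u (u + h) + K (u + h) u =
      ((deriv z (u + h) - deriv z u) / (z (u + h) - z u)).im := fun u => by
    rw [hK.eq_of_ne (hne u), hK.eq_of_ne (hne u).symm, angularSpeed, angularSpeed,
      ← neg_sub (z (u + h)) (z u), div_neg, Complex.neg_im, sub_div, Complex.sub_im,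
      ← sub_eq_add_neg]
  have hclosed : z (L + h) - z L = z (0 + h) - z 0 := by
    rw [add_comm L, hz.periodic, zero_add, ← hz.periodic 0, zero_add]
  simp_rw [hspeed]
  rw [coe_integral_im_div_eq_arg (f := fun u => z (u + h) - z u) hz.pos.le
      (fun u _ => (((hderiv (u + h)).comp_add_const u h).sub (hderiv u)).hasDerivWithinAt)
      (by have := hd.continuous_deriv_one; fun_prop) (fun u _ => sub_ne_zero.2 (hne u)),
    hclosed, div_self (sub_ne_zero.2 (hne 0)), Complex.arg_one, Real.Angle.coe_zero]

lemma integral_chord_eq (hK : IsAngularSpeedExtension z K) (hz : IsSimpleLoop L z)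
    (hd : ContDiff ℝ 1 z) {h : ℝ} (hh : h ∈ Set.Icc 0 L) :
    ∫ u in (0 : ℝ)..L, (K u (u + h) + K (u + h) u) = 2 * ∫ u in (0 : ℝ)..L, K u u := by
  have hcont : Continuous fun h => ∫ u in (0 : ℝ)..L, (K u (u + h) + K (u + h) u) :=
    intervalIntegral.continuous_parametric_intervalIntegral_of_continuous'
      (continuous_uncurry_add_swap hK.continuous) 0 L
  have hzero : Set.EqOn (fun h => ((∫ u in (0 : ℝ)..L, (K u (u + h) + K (u + h) u) : ℝ) :
      Real.Angle)) 0 (closure (Set.Ioo 0 L)) :=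
    Set.EqOn.closure (fun _ => hK.coe_integral_chord_eq_zero hz hd)
      (Real.Angle.continuous_coe.comp hcont) continuous_const
  rw [closure_Ioo hz.pos.ne] at hzero
  rw [eq_of_coe_angle_eq isPreconnected_Icc hcont.continuousOn hzero hh
    (Set.left_mem_Icc.2 hz.pos.le)]
  simp only [add_zero, ← two_mul, intervalIntegral.integral_const_mul]

theorem integral_eq_integral_diag (hK : IsAngularSpeedExtension z K) (hz : IsSimpleLoop L z)
    (hd : ContDiff ℝ 1 z) (s : ℝ) :
    ∫ t in (0 : ℝ)..L, K s t = ∫ t in (0 : ℝ)..L, K t t := by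
  have haverage : (2 * L) * ∫ t in (0 : ℝ)..L, K s t = (2 * L) * ∫ t in (0 : ℝ)..L, K t t := calc
    (2 * L) * ∫ t in (0 : ℝ)..L, K s t
      = 2 * ∫ u in (0 : ℝ)..L, ∫ t in (0 : ℝ)..L, K u t := by
        simp [fun u => hK.integral_eq_integral hz hd u s, mul_assoc]
    _ = ∫ h in (0 : ℝ)..L, ∫ u in (0 : ℝ)..L, (K u (u + h) + K (u + h) u) :=
        (integral_integral_add_swap_of_periodic hK.continuous (hK.periodic_right hz)
          (hK.periodic_left hz)).symm
    _ = ∫ _ in (0 : ℝ)..L, 2 * ∫ t in (0 : ℝ)..L, K t t :=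
        intervalIntegral.integral_congr fun h hh =>
          hK.integral_chord_eq hz hd (Set.uIcc_of_le hz.pos.le ▸ hh)
    _ = (2 * L) * ∫ t in (0 : ℝ)..L, K t t := by
        rw [intervalIntegral.integral_const, smul_eq_mul, sub_zero]
        ring
  exact mul_left_cancel₀ (mul_ne_zero two_ne_zero hz.pos.ne') haverage

end IsAngularSpeedExtension

section DoubleLayer

/-- The isometry `(x, y) ↦ x + i y`, through which plane curves become complex-valued. -/
noncomputable abbrev planeToComplex : EuclideanSpace ℝ (Fin 2) ≃ₗᵢ[ℝ] ℂ :=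
  Complex.orthonormalBasisOneI.repr.symm

variable {q : ℝ → EuclideanSpace ℝ (Fin 2)}

lemma dlKernel_eq_neg_angularSpeed (hq : Differentiable ℝ q) (s t : ℝ) :
    dlKernel q s t = -angularSpeed (planeToComplex ∘ q) s t := by
  have hderiv : deriv (planeToComplex ∘ q) t = planeToComplex (deriv q t) :=
    (planeToComplex.toContinuousLinearEquiv.hasFDerivAt.comp_hasDerivAt t (hq t).hasDerivAt).deriv
  have hnorm : ‖q s - q t‖ ^ 2 = Complex.normSq (planeToComplex (q t - q s)) := by
    rw [Complex.normSq_eq_norm_sq, LinearIsometryEquiv.norm_map, norm_sub_rev]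
  rw [dlKernel, hnorm, angularSpeed, hderiv, Function.comp_apply, Function.comp_apply, ← map_sub,
    Complex.div_im]
  simp only [Complex.orthonormalBasisOneI_repr_symm_apply, PiLp.sub_apply, Complex.ofReal_sub,
    Complex.add_im, Complex.ofReal_im, Complex.mul_im, Complex.ofReal_re, Complex.I_im, mul_one,
    Complex.I_re, mul_zero, add_zero, zero_add, Complex.add_re, Complex.sub_re, Complex.mul_re,
    Complex.sub_im, sub_self]
  ring

/-- For a curve of arbitrary speed, `dlKernel q s t` carries the arc length factor `‖deriv q t‖`, so
that both integrals are with respect to arc length. -/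
theorem double_layer_potential_of_one_general {L : ℝ} (hloop : IsSimpleLoop L q)
    (hq : ContDiff ℝ 1 q) {ktil : ℝ → ℝ → ℝ} (hcont : Continuous ktil.uncurry)
    (hoff : ∀ s t, q s ≠ q t → ktil s t = dlKernel q s t) (s : ℝ) :
    ∫ t in (0 : ℝ)..L, ktil s t = ∫ t in (0 : ℝ)..L, ktil t t := by
  have hK : IsAngularSpeedExtension (planeToComplex ∘ q) (fun s t => -ktil s t) :=
    ⟨hcont.neg, fun {s t} hne => by
      rw [hoff s t fun h => hne (congrArg planeToComplex h.symm),
        dlKernel_eq_neg_angularSpeed (hq.differentiable one_ne_zero), neg_neg]⟩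
  have h := hK.integral_eq_integral_diag (hloop.comp_injective planeToComplex.injective)
    (planeToComplex.contDiff.comp hq) s
  simpa only [intervalIntegral.integral_neg, neg_inj] using h

lemma integral_dlDiag (q : ℝ → EuclideanSpace ℝ (Fin 2)) (a b : ℝ) :
    ∫ t in a..b, dlDiag q t = -(1 / 2) * ∫ t in a..b,
      (deriv (deriv q) t 1 * deriv q t 0 - deriv (deriv q) t 0 * deriv q t 1) := by
  rw [← intervalIntegral.integral_const_mul]
  congr with t
  rw [dlDiag]
  ring

end DoubleLayer

/-- The double layer potential of the constant function 1 equals −1 on the boundary: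
for every `s`, `(1/π) ∫₀^L k̃(s,t) dt = −1`, where `k̃` is the continuous extension of the
double layer kernel across the diagonal. -/
theorem double_layer_potential_of_one
    (L : ℝ) (hL : 0 < L)
    (q : ℝ → EuclideanSpace ℝ (Fin 2))
    (hq : ContDiff ℝ 2 q)
    (hper : ∀ s, q (s + L) = q s)
    (hunit : ∀ s, ‖deriv q s‖ = 1)
    (hinj : Set.InjOn q (Set.Ico 0 L))
    (horient : (∫ t in (0:ℝ)..L,
      (deriv (deriv q) t 1 * deriv q t 0 - deriv (deriv q) t 0 * deriv q t 1)) = 2 * π)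
    (ktil : ℝ → ℝ → ℝ)
    (hcont : Continuous (fun p : ℝ × ℝ => ktil p.1 p.2))
    (hoff : ∀ s t, q s ≠ q t → ktil s t = dlKernel q s t)
    (hdiag : ∀ t, ktil t t = dlDiag q t) :
    ∀ s : ℝ, ((1 / π) * ∫ t in (0:ℝ)..L, ktil s t) = -1 := by
  intro s
  rw [double_layer_potential_of_one_general ⟨hL, hper, hinj⟩ (hq.of_le one_le_two) hcont hoff s,
    intervalIntegral.integral_congr fun t _ => hdiag t, integral_dlDiag, horient]
  field_simp
end

section
/- The squared Hilbert–Schmidt norm of the double layer potential is at least 1: (1/π²) ∫₀^L ∫₀^L k(s,t)² dt ds ≥ 1. -/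
open Real Filter Topology MeasureTheory intervalIntegral

/-!
For fixed `s`, identify the plane with `ℂ` and put `z t = q t - q s`. Then `-k(s,t)` is the
imaginary part of `z' / z`, the rate at which the direction of the chord from `q s` to `q t` turns.
While `t` runs over one period from `s` to `s + L` this direction goes from `q'(s)` to `-q'(s)`, so
the total turning is an odd multiple of `π` and `|∫ k(s,t) dt| ≥ π`. By the Cauchy–Schwarz
inequality `∫ k(s,t)² dt ≥ π² / L`, and integrating over `s` gives the bound.
-/

open Function (Periodic)

section Periodic

variable {α β : Type*} [AddCommGroup α] [LinearOrder α] [IsOrderedAddMonoid α] [Archimedean α]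
  {f : α → β} {p a : α}

lemma eq_iff_modEq_of_periodic_of_injOn (hp : 0 < p) (hf : Periodic f p)
    (hinj : Set.InjOn f (Set.Ico a (a + p))) {x y : α} : f x = f y ↔ x ≡ y [PMOD p] := by
  have toIcoMod_eq (x : α) : f (toIcoMod hp a x) = f x := hf.sub_zsmul_eq _
  rw [← toIcoMod_inj hp (c := a), ← toIcoMod_eq x, ← toIcoMod_eq y,
    hinj.eq_iff (toIcoMod_mem_Ico hp a x) (toIcoMod_mem_Ico hp a y)]

lemma injOn_Ico_of_periodic_of_injOn (hp : 0 < p) (hf : Periodic f p)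
    (hinj : Set.InjOn f (Set.Ico a (a + p))) (b : α) : Set.InjOn f (Set.Ico b (b + p)) := by
  intro x hx y hy hxy
  rw [eq_iff_modEq_of_periodic_of_injOn hp hf hinj, ← toIcoMod_inj hp (c := b)] at hxy
  rwa [(toIcoMod_eq_self hp).2 hx, (toIcoMod_eq_self hp).2 hy] at hxy

lemma countable_fiber_of_periodic_of_injOn (hp : 0 < p) (hf : Periodic f p)
    (hinj : Set.InjOn f (Set.Ico a (a + p))) (x : α) : {y | f x = f y}.Countable := by
  refine (Set.countable_range fun n : ℤ => x + n • p).mono fun y hxy => ?_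
  obtain ⟨n, hn⟩ := AddCommGroup.modEq_iff_zsmul.1
    ((eq_iff_modEq_of_periodic_of_injOn hp hf hinj).1 hxy)
  exact ⟨n, by simp only [hn, add_sub_cancel]⟩

end Periodic

lemma deriv_periodic {𝕜 E : Type*} [NontriviallyNormedField 𝕜] [NormedAddCommGroup E]
    [NormedSpace 𝕜 E] {f : 𝕜 → E} {c : 𝕜} (hf : Periodic f c) : Periodic (deriv f) c := fun t => by
  rw [← deriv_comp_add_const, funext hf]

section Normalize

variable {E : Type*} [NormedAddCommGroup E] [NormedSpace ℝ E] {f : ℝ → E} {f' : E} {a : ℝ}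

lemma continuousAt_normalize {v : E} (hv : v ≠ 0) :
    ContinuousAt (NormedSpace.normalize : E → E) v :=
  (continuousAt_id.norm.inv₀ (norm_ne_zero_iff.2 hv)).smul continuousAt_id

lemma tendsto_normalize_slope (hf : HasDerivAt f f' a) (hf' : f' ≠ 0) :
    Tendsto (fun t => NormedSpace.normalize (slope f a t)) (𝓝[≠] a)
      (𝓝 (NormedSpace.normalize f')) :=
  (continuousAt_normalize hf').tendsto.comp hf.tendsto_slope

lemma tendsto_normalize_nhdsGT (hf : HasDerivAt f f' a) (hf' : f' ≠ 0) (ha : f a = 0) :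
    Tendsto (fun t => NormedSpace.normalize (f t)) (𝓝[>] a) (𝓝 (NormedSpace.normalize f')) := by
  refine ((tendsto_normalize_slope hf hf').mono_left (nhdsGT_le_nhdsNE a)).congr' ?_
  filter_upwards [self_mem_nhdsWithin] with t ht
  rw [slope_def_module, ha, sub_zero, NormedSpace.normalize_smul_of_pos (inv_pos.2 (sub_pos.2 ht))]

lemma tendsto_normalize_nhdsLT (hf : HasDerivAt f f' a) (hf' : f' ≠ 0) (ha : f a = 0) :
    Tendsto (fun t => NormedSpace.normalize (f t)) (𝓝[<] a) (𝓝 (-NormedSpace.normalize f')) := by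
  refine ((tendsto_normalize_slope hf hf').mono_left (nhdsLT_le_nhdsNE a)).neg.congr' ?_
  filter_upwards [self_mem_nhdsWithin] with t ht
  rw [slope_def_module, ha, sub_zero,
    NormedSpace.normalize_smul_of_neg (inv_lt_zero.2 (sub_neg.2 ht)), neg_neg]

end Normalize

section Turning

variable {z : ℝ → ℂ} {t : ℝ}

lemma hasDerivAt_norm_of_ne_zero (hz : DifferentiableAt ℝ z t) (h0 : z t ≠ 0) :
    HasDerivAt (fun t => ‖z t‖) (‖z t‖ * (logDeriv z t).re) t := by
  have hnorm : ‖z t‖ ≠ 0 := norm_ne_zero_iff.2 h0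
  have hsqrt := hz.hasDerivAt.norm_sq.sqrt (pow_ne_zero 2 hnorm)
  simp only [Real.sqrt_sq (norm_nonneg _)] at hsqrt
  refine hsqrt.congr_deriv ?_
  have hinner : inner ℝ (z t) (deriv z t) = ‖z t‖ ^ 2 * (logDeriv z t).re := by
    rw [Complex.inner, logDeriv_apply, Complex.div_re, Complex.sq_norm]
    have := Complex.normSq_pos.2 h0
    simp only [Complex.mul_re, Complex.conj_re, Complex.conj_im]
    field_simp
    ring
  rw [hinner]
  field_simp

lemma hasDerivAt_normalize (hz : DifferentiableAt ℝ z t) (h0 : z t ≠ 0) :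
    HasDerivAt (fun t => NormedSpace.normalize (z t))
      (((logDeriv z t).im * Complex.I) • NormedSpace.normalize (z t)) t := by
  have hnorm : (‖z t‖ : ℂ) ≠ 0 := by exact_mod_cast norm_ne_zero_iff.2 h0
  have hdiv := hz.hasDerivAt.div (hasDerivAt_norm_of_ne_zero hz h0).ofReal_comp hnorm
  have hnormalize (w : ℂ) : NormedSpace.normalize w = w / (‖w‖ : ℂ) := by
    rw [NormedSpace.normalize, Complex.real_smul, Complex.ofReal_inv, inv_mul_eq_div]
  have hderiv : deriv z t = z t * ((logDeriv z t).re + (logDeriv z t).im * Complex.I) := by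
    rw [Complex.re_add_im, logDeriv_apply, mul_div_cancel₀ _ h0]
  simp only [hnormalize]
  refine hdiv.congr_deriv ?_
  rw [hderiv, smul_eq_mul]
  push_cast
  field_simp
  ring

variable {a b : ℝ}

lemma eq_exp_integral_smul_of_hasDerivAt {E : Type*} [NormedAddCommGroup E] [NormedSpace ℂ E]
    [CompleteSpace E] {g : ℝ → ℂ} {u : ℝ → E} {ua ub : E} (hab : a < b)
    (hgi : IntervalIntegrable g volume a b) (hgc : ContinuousOn g (Set.Ioo a b))
    (hu : ∀ t ∈ Set.Ioo a b, HasDerivAt u (g t • u t) t)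
    (ha : Tendsto u (𝓝[>] a) (𝓝 ua)) (hb : Tendsto u (𝓝[<] b) (𝓝 ub)) :
    ub = Complex.exp (∫ t in a..b, g t) • ua := by
  set G : ℝ → ℂ := fun t => ∫ x in a..t, g x with hG
  have hGderiv : ∀ t ∈ Set.Ioo a b, HasDerivAt G (g t) t := fun t ht =>
    integral_hasDerivAt_right (hgi.mono_set (Set.uIcc_subset_uIcc_left
        (Set.Icc_subset_uIcc (Set.Ioo_subset_Icc_self ht))))
      (hgc.stronglyMeasurableAtFilter isOpen_Ioo t ht) (hgc.continuousAt (isOpen_Ioo.mem_nhds ht))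
  have hGcont : ContinuousOn G (Set.Icc a b) := by
    simpa only [Set.uIcc_of_le hab.le] using
      continuousOn_primitive_interval' hgi Set.left_mem_uIcc
  have hderiv : ∀ t ∈ Set.Ioo a b, HasDerivAt (fun t => Complex.exp (-G t) • u t) 0 t := by
    intro t ht
    refine ((hGderiv t ht).neg.cexp.smul (hu t ht)).congr_deriv ?_
    module
  have hGa : Tendsto G (𝓝[>] a) (𝓝 (G a)) :=
    (hGcont.continuousWithinAt (Set.left_mem_Icc.2 hab.le)).mono_of_mem_nhdsWithin
      (Icc_mem_nhdsGT hab)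
  have hGb : Tendsto G (𝓝[<] b) (𝓝 (G b)) :=
    (hGcont.continuousWithinAt (Set.right_mem_Icc.2 hab.le)).mono_of_mem_nhdsWithin
      (Icc_mem_nhdsLT hab)
  have hconst := integral_eq_sub_of_hasDerivAt_of_tendsto hab hderiv
    intervalIntegrable_const (hGa.neg.cexp.smul ha) (hGb.neg.cexp.smul hb)
  simp only [hG, integral_same, neg_zero, Complex.exp_zero, one_smul,
    intervalIntegral.integral_zero] at hconst
  rw [← sub_eq_zero.1 hconst.symm, smul_smul, ← Complex.exp_add, add_neg_cancel, Complex.exp_zero,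
    one_smul]

lemma pi_le_abs_of_exp_mul_I_eq_neg_one {x : ℝ} (hx : Complex.exp (x * Complex.I) = -1) :
    π ≤ |x| := by
  have hcos : Real.cos |x| = -1 := by
    rw [Real.cos_abs, ← Complex.exp_ofReal_mul_I_re, hx, Complex.neg_re, Complex.one_re]
  by_contra! hlt
  have := Real.cos_lt_cos_of_nonneg_of_le_pi (abs_nonneg x) le_rfl hlt
  rw [hcos, Real.cos_pi] at this
  exact lt_irrefl _ this

lemma pi_le_abs_integral_im_logDeriv (hab : a < b) (ha : z a = 0) (hb : z b = 0)
    (h0 : ∀ t ∈ Set.Ioo a b, z t ≠ 0) (hz : ∀ t ∈ Set.Ioo a b, DifferentiableAt ℝ z t)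
    (htan : deriv z b = deriv z a) (hreg : deriv z a ≠ 0)
    (hint : IntervalIntegrable (fun t => (logDeriv z t).im) volume a b)
    (hcont : ContinuousOn (fun t => (logDeriv z t).im) (Set.Ioo a b)) :
    π ≤ |∫ t in a..b, (logDeriv z t).im| := by
  set v := NormedSpace.normalize (deriv z a)
  have hv : v ≠ 0 := mt (NormedSpace.normalize_eq_zero_iff _).1 hreg
  have hstart : Tendsto (fun t => NormedSpace.normalize (z t)) (𝓝[>] a) (𝓝 v) :=
    tendsto_normalize_nhdsGT (differentiableAt_of_deriv_ne_zero hreg).hasDerivAt hreg ha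
  have hend : Tendsto (fun t => NormedSpace.normalize (z t)) (𝓝[<] b) (𝓝 (-v)) := by
    have hreg' : deriv z b ≠ 0 := htan ▸ hreg
    simpa only [htan] using
      tendsto_normalize_nhdsLT (differentiableAt_of_deriv_ne_zero hreg').hasDerivAt hreg' hb
  have hturn : -v = Complex.exp (∫ t in a..b, (logDeriv z t).im * Complex.I) • v := by
    have hint' : IntervalIntegrable (fun t => ((logDeriv z t).im : ℂ)) volume a b :=
      ⟨hint.1.ofReal, hint.2.ofReal⟩
    have hcont' := (Complex.continuous_ofReal.comp_continuousOn hcont).mul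
      (continuousOn_const (c := Complex.I))
    exact eq_exp_integral_smul_of_hasDerivAt hab (hint'.mul_const _) hcont'
      (fun t ht => hasDerivAt_normalize (hz t ht) (h0 t ht)) hstart hend
  apply pi_le_abs_of_exp_mul_I_eq_neg_one
  rw [intervalIntegral.integral_mul_const, intervalIntegral.integral_ofReal, smul_eq_mul] at hturn
  exact mul_right_cancel₀ hv (by rw [← hturn, neg_one_mul])

end Turning

lemma sq_integral_le_mul_integral_sq {f : ℝ → ℝ} {a b : ℝ} (hab : a ≤ b)
    (hf : IntervalIntegrable f volume a b)
    (hf2 : IntervalIntegrable (fun t => f t ^ 2) volume a b) :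
    (∫ t in a..b, f t) ^ 2 ≤ (b - a) * ∫ t in a..b, f t ^ 2 := by
  obtain rfl | hab := hab.eq_or_lt
  · simp
  have : 0 < b - a := sub_pos.2 hab
  have jensen : (⨍ t in a..b, f t) ^ 2 ≤ ⨍ t in a..b, f t ^ 2 :=
    even_two.convexOn_pow.map_set_average_le (by fun_prop) isClosed_univ
      (by simpa [Set.uIoc_of_le hab.le] using hab) (by simp [Set.uIoc])
      (by simp) hf.def' hf2.def'
  rw [interval_average_eq_div, interval_average_eq_div, div_pow, div_le_iff₀ (by positivity)]
    at jensen
  calc (∫ t in a..b, f t) ^ 2 ≤ (∫ t in a..b, f t ^ 2) / (b - a) * (b - a) ^ 2 := jensen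
    _ = (b - a) * ∫ t in a..b, f t ^ 2 := by field_simp

section Kernel

variable {q : ℝ → EuclideanSpace ℝ (Fin 2)} {L s t : ℝ}

/-- The chord from `q s` to `q t`, read as a complex number so that its turning rate is the
imaginary part of a logarithmic derivative in `t`. -/
noncomputable def chord (q : ℝ → EuclideanSpace ℝ (Fin 2)) (s t : ℝ) : ℂ :=
  Complex.orthonormalBasisOneI.repr.symm (q t - q s)

lemma chord_eq_zero_iff : chord q s t = 0 ↔ q t = q s := by
  rw [chord, LinearIsometryEquiv.map_eq_zero_iff, sub_eq_zero]

lemma hasDerivAt_chord (hq : DifferentiableAt ℝ q t) :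
    HasDerivAt (chord q s) (Complex.orthonormalBasisOneI.repr.symm (deriv q t)) t :=
  Complex.orthonormalBasisOneI.repr.symm.hasFDerivAt.comp_hasDerivAt t
    (hq.hasDerivAt.sub_const (q s))

lemma dlKernel_eq_neg_im_logDeriv_chord (hq : DifferentiableAt ℝ q t) :
    dlKernel q s t = -(logDeriv (chord q s) t).im := by
  have hnorm : ‖q s - q t‖ ^ 2 = Complex.normSq (chord q s t) := by
    rw [chord, ← Complex.sq_norm, LinearIsometryEquiv.norm_map, norm_sub_rev]
  rw [logDeriv_apply, (hasDerivAt_chord hq).deriv, Complex.div_im, ← hnorm, dlKernel]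
  simp only [chord, Complex.orthonormalBasisOneI_repr_symm_apply, PiLp.sub_apply, Complex.add_re,
    Complex.add_im, Complex.mul_re, Complex.mul_im, Complex.ofReal_re, Complex.ofReal_im,
    Complex.I_re, Complex.I_im]
  ring

lemma dlKernel_periodic (hper : Periodic q L) (s : ℝ) : Periodic (dlKernel q s) L := fun t => by
  simp only [dlKernel, hper t, deriv_periodic hper t]

lemma pi_le_abs_integral_dlKernel (hL : 0 < L) (hper : Periodic q L) (hq : Differentiable ℝ q)
    (hreg : deriv q s ≠ 0) (hne : ∀ t ∈ Set.Ioo s (s + L), q s ≠ q t)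
    (hint : IntervalIntegrable (dlKernel q s) volume s (s + L))
    (hcont : ContinuousOn (dlKernel q s) (Set.Ioo s (s + L))) :
    π ≤ |∫ t in s..(s + L), dlKernel q s t| := by
  have hturn : (fun t => (logDeriv (chord q s) t).im) = fun t => -dlKernel q s t := by
    funext t
    rw [dlKernel_eq_neg_im_logDeriv_chord (hq t), neg_neg]
  have hderiv (t : ℝ) := (hasDerivAt_chord (s := s) (hq t)).deriv
  have hpi := pi_le_abs_integral_im_logDeriv (lt_add_of_pos_right s hL)
    (chord_eq_zero_iff.2 rfl) (chord_eq_zero_iff.2 (hper s))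
    (fun t ht => mt chord_eq_zero_iff.1 (hne t ht).symm)
    (fun t _ => (hasDerivAt_chord (hq t)).differentiableAt)
    (by rw [hderiv, hderiv, deriv_periodic hper])
    (by rwa [hderiv, Ne, LinearIsometryEquiv.map_eq_zero_iff])
    (hturn ▸ hint.neg) (hturn ▸ hcont.neg)
  rwa [hturn, intervalIntegral.integral_neg, abs_neg] at hpi

lemma pi_le_abs_integral_of_eq_dlKernel {a : ℝ} {k : ℝ → ℝ} (hL : 0 < L) (hper : Periodic q L)
    (hq : Differentiable ℝ q) (hreg : deriv q s ≠ 0) (hinj : Set.InjOn q (Set.Ico a (a + L)))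
    (hk : Continuous k) (hoff : ∀ t, q s ≠ q t → k t = dlKernel q s t) :
    π ≤ |∫ t in a..(a + L), k t| := by
  have hae : k =ᵐ[volume] dlKernel q s := by
    filter_upwards [(countable_fiber_of_periodic_of_injOn hL hper hinj s).ae_notMem volume]
      with t ht using hoff t ht
  have hne : ∀ t ∈ Set.Ioo s (s + L), q s ≠ q t := fun t ht heq =>
    ht.1.ne (injOn_Ico_of_periodic_of_injOn hL hper hinj s
      (Set.left_mem_Ico.2 (lt_add_of_pos_right s hL)) (Set.Ioo_subset_Ico_self ht) heq)
  calc π ≤ |∫ t in s..(s + L), dlKernel q s t| :=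
        pi_le_abs_integral_dlKernel hL hper hq hreg hne
          ((hk.intervalIntegrable _ _).congr_ae (ae_restrict_of_ae hae))
          (hk.continuousOn.congr fun t ht => (hoff t (hne t ht)).symm)
    _ = |∫ t in a..(a + L), dlKernel q s t| := by
        rw [(dlKernel_periodic hper s).intervalIntegral_add_eq s a]
    _ = |∫ t in a..(a + L), k t| := by
        rw [integral_congr_ae (hae.mono fun t ht _ => ht.symm)]

lemma sq_pi_div_le_integral_sq_of_eq_dlKernel {a : ℝ} {k : ℝ → ℝ} (hL : 0 < L)
    (hper : Periodic q L) (hq : Differentiable ℝ q) (hreg : deriv q s ≠ 0)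
    (hinj : Set.InjOn q (Set.Ico a (a + L))) (hk : Continuous k)
    (hoff : ∀ t, q s ≠ q t → k t = dlKernel q s t) :
    π ^ 2 / L ≤ ∫ t in a..(a + L), k t ^ 2 := by
  rw [div_le_iff₀' hL]
  calc π ^ 2 ≤ (∫ t in a..(a + L), k t) ^ 2 := sq_le_sq.2 <| by
        rw [abs_of_pos pi_pos]
        exact pi_le_abs_integral_of_eq_dlKernel hL hper hq hreg hinj hk hoff
    _ ≤ L * ∫ t in a..(a + L), k t ^ 2 := by
        simpa only [add_sub_cancel_left] using
          sq_integral_le_mul_integral_sq (lt_add_of_pos_right a hL).le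
            (hk.intervalIntegrable _ _) ((hk.pow 2).intervalIntegrable _ _)

end Kernel

/-- For a parametrization of arbitrary speed, `dlKernel q s t` includes the factor `‖q'(t)‖`. -/
theorem double_layer_trace_ge_one_general
    (L : ℝ) (hL : 0 < L)
    (q : ℝ → EuclideanSpace ℝ (Fin 2))
    (hper : ∀ s, q (s + L) = q s)
    (hreg : ∀ s, deriv q s ≠ 0)
    (hinj : Set.InjOn q (Set.Ico 0 L))
    (ktil : ℝ → ℝ → ℝ)
    (hcont : Continuous (fun p : ℝ × ℝ => ktil p.1 p.2))
    (hoff : ∀ s t, q s ≠ q t → ktil s t = dlKernel q s t) :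
    1 ≤ (1 / π ^ 2) * ∫ s in (0:ℝ)..L, ∫ t in (0:ℝ)..L, (ktil s t) ^ 2 := by
  have hq : Differentiable ℝ q := fun t => differentiableAt_of_deriv_ne_zero (hreg t)
  have hinner (s : ℝ) : π ^ 2 / L ≤ ∫ t in (0:ℝ)..L, ktil s t ^ 2 := by
    have hk : Continuous (ktil s) := hcont.comp (Continuous.prodMk_right s)
    simpa only [zero_add] using sq_pi_div_le_integral_sq_of_eq_dlKernel (a := 0) hL hper hq
      (hreg s) (by rwa [zero_add]) hk (hoff s)
  have hcont_inner : Continuous fun s => ∫ t in (0:ℝ)..L, ktil s t ^ 2 :=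
    continuous_parametric_intervalIntegral_of_continuous' (hcont.pow 2) 0 L
  rw [one_div, ← div_eq_inv_mul, one_le_div (by positivity)]
  calc π ^ 2 = ∫ _s in (0:ℝ)..L, π ^ 2 / L := by
        rw [intervalIntegral.integral_const, sub_zero, smul_eq_mul, mul_div_cancel₀ _ hL.ne']
    _ ≤ ∫ s in (0:ℝ)..L, ∫ t in (0:ℝ)..L, ktil s t ^ 2 :=
        integral_mono hL.le intervalIntegrable_const (hcont_inner.intervalIntegrable _ _) hinner

/-- The squared Hilbert–Schmidt norm of the double layer potential is at least 1:
`(1/π²) ∫₀^L ∫₀^L k̃(s,t)² dt ds ≥ 1`. -/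
theorem double_layer_trace_ge_one
    (L : ℝ) (hL : 0 < L)
    (q : ℝ → EuclideanSpace ℝ (Fin 2))
    (hq : ContDiff ℝ 2 q)
    (hper : ∀ s, q (s + L) = q s)
    (hunit : ∀ s, ‖deriv q s‖ = 1)
    (hinj : Set.InjOn q (Set.Ico 0 L))
    (horient : (∫ t in (0:ℝ)..L,
      (deriv (deriv q) t 1 * deriv q t 0 - deriv (deriv q) t 0 * deriv q t 1)) = 2 * π)
    (ktil : ℝ → ℝ → ℝ)
    (hcont : Continuous (fun p : ℝ × ℝ => ktil p.1 p.2))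
    (hoff : ∀ s t, q s ≠ q t → ktil s t = dlKernel q s t)
    (hdiag : ∀ t, ktil t t = dlDiag q t) :
    1 ≤ (1 / π ^ 2) * ∫ s in (0:ℝ)..L, ∫ t in (0:ℝ)..L, (ktil s t) ^ 2 :=
  double_layer_trace_ge_one_general L hL q hper
    (fun s => norm_ne_zero_iff.1 (hunit s ▸ one_ne_zero)) hinj ktil hcont hoff
end

section
/- If the double layer potential annihilates all mean-zero functions — that is, if for every continuous L-periodic function ψ : ℝ → ℝ with ∫₀^L ψ(t) dt = 0 one has ∫₀^L k(s,t) ψ(t) dt = 0 for all s ∈ ℝ — then the boundary curve is a circle: there exist c ∈ ℝ² and R > 0 such that ‖q(s) − c‖ = R for all s. -/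
open Real Filter Topology MeasureTheory intervalIntegral

/-! If the double layer operator annihilates mean-zero functions, then `k(s, ·)` is orthogonal to
itself minus its mean, hence equal to a constant `a(s)`; that is,
`⟨q(s) - q(t), n(t)⟩ = a(s) ‖q(s) - q(t)‖²` for all `s`, `t`. Differentiating in `t`, where
`n' = κ q'`, gives `(κ(t) + 2 a(s)) ⟨q(s) - q(t), q'(t)⟩ = 0`, and the second factor does not vanish
for `t ≠ s` near `s`. So the continuous function `κ` is locally constant, and a closed plane curve
of constant curvature is a circle. -/

lemma eqOn_zero_of_intervalIntegral_sq_eq_zero {f : ℝ → ℝ} {a b : ℝ} (hab : a < b)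
    (hf : ContinuousOn f (Set.Icc a b)) (hint : ∫ t in a..b, f t ^ 2 = 0) :
    Set.EqOn f 0 (Set.Icc a b) := by
  intro t ht
  by_contra hne
  exact (intervalIntegral.integral_pos hab (hf.pow 2) (fun _ _ => sq_nonneg _)
    ⟨t, ht, sq_pos_of_ne_zero hne⟩).ne' hint

lemma eq_of_periodic_of_forall_integral_mul_eq_zero {f : ℝ → ℝ} {L : ℝ} (hL : 0 < L)
    (hf : Continuous f) (hper : Function.Periodic f L)
    (horth : ∀ ψ : ℝ → ℝ, Continuous ψ → Function.Periodic ψ L →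
      ∫ t in (0 : ℝ)..L, ψ t = 0 → ∫ t in (0 : ℝ)..L, f t * ψ t = 0) (s t : ℝ) :
    f s = f t := by
  set m : ℝ := (∫ t in (0 : ℝ)..L, f t) / L with hm
  have hcont : Continuous fun t => f t - m := by fun_prop
  have hmean : ∫ t in (0 : ℝ)..L, (f t - m) = 0 := by
    rw [intervalIntegral.integral_sub (hf.intervalIntegrable _ _) (by simp),
      intervalIntegral.integral_const, smul_eq_mul, sub_zero, hm,
      mul_div_cancel₀ _ hL.ne', sub_self]
  have horth_self : ∫ t in (0 : ℝ)..L, f t * (f t - m) = 0 :=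
    horth _ hcont (fun t => by simp only [hper t]) hmean
  have hsq : ∫ t in (0 : ℝ)..L, (f t - m) ^ 2 = 0 := calc
    _ = ∫ t in (0 : ℝ)..L, (f t * (f t - m) - m * (f t - m)) := by
      congr with t
      ring
    _ = 0 := by
      rw [intervalIntegral.integral_sub (by apply Continuous.intervalIntegrable; fun_prop)
        (by apply Continuous.intervalIntegrable; fun_prop), intervalIntegral.integral_const_mul,
        horth_self, hmean, mul_zero, sub_zero]
  have heq (x : ℝ) : f x = m := by
    obtain ⟨y, hy, hxy⟩ := hper.exists_mem_Ico₀ hL x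
    rw [hxy]
    exact sub_eq_zero.mp
      (eqOn_zero_of_intervalIntegral_sq_eq_zero hL hcont.continuousOn hsq ⟨hy.1, hy.2.le⟩)
  rw [heq s, heq t]

section NormedSpace

variable {F : Type*} [NormedAddCommGroup F] [NormedSpace ℝ F] {γ : ℝ → F}

lemma hasDerivAt_of_norm_deriv_eq_one {t : ℝ} (hunit : ‖deriv γ t‖ = 1) :
    HasDerivAt γ (deriv γ t) t :=
  (differentiableAt_of_deriv_ne_zero (norm_ne_zero_iff.mp (hunit ▸ one_ne_zero))).hasDerivAt

lemma periodic_deriv {L : ℝ} (hper : Function.Periodic γ L) : Function.Periodic (deriv γ) L :=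
  fun t => by rw [← deriv_comp_add_const, hper.funext]

lemma dense_setOf_ne_of_deriv_ne_zero (hγ : ∀ t, deriv γ t ≠ 0) (p : F) :
    Dense {t | γ t ≠ p} := fun t =>
  (((differentiableAt_of_deriv_ne_zero (hγ t)).hasDerivAt.eventually_ne
    (hγ t)).frequently.filter_mono nhdsWithin_le_nhds).mem_closure

lemma deriv_eq_zero_of_periodic_of_deriv_deriv_eq_zero {L : ℝ} (hL : L ≠ 0)
    (hγ : Differentiable ℝ γ) (hγ' : Differentiable ℝ (deriv γ))
    (hγ'' : ∀ t, deriv (deriv γ) t = 0) (hper : Function.Periodic γ L) (t : ℝ) :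
    deriv γ t = 0 := by
  have hderiv (x : ℝ) : HasDerivAt (fun x => γ x - x • deriv γ t) 0 x := by
    have h := (hγ x).hasDerivAt.sub ((hasDerivAt_id x).smul_const (deriv γ t))
    rwa [one_smul, is_const_of_deriv_eq_zero hγ' hγ'' x t, sub_self] at h
  have hconst := is_const_of_deriv_eq_zero (fun x => (hderiv x).differentiableAt)
    (fun x => (hderiv x).deriv) L 0
  rw [zero_smul, sub_zero, hper.eq, sub_eq_self] at hconst
  exact (smul_eq_zero.mp hconst).resolve_left hL

end NormedSpace

open scoped RealInnerProductSpace

section InnerProductSpace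

variable {F : Type*} [NormedAddCommGroup F] [InnerProductSpace ℝ F] {γ : ℝ → F}

lemma inner_deriv_deriv_eq_zero_of_norm_deriv_eq_one {t : ℝ}
    (hγ' : DifferentiableAt ℝ (deriv γ) t) (hunit : ∀ x, ‖deriv γ x‖ = 1) :
    ⟪deriv γ t, deriv (deriv γ) t⟫ = 0 := by
  have hderiv := hγ'.hasDerivAt.norm_sq
  simp only [hunit] at hderiv
  linarith [hderiv.unique (hasDerivAt_const t _)]

lemma eventually_inner_sub_deriv_ne_zero {s : ℝ} (hγ' : DifferentiableAt ℝ (deriv γ) s)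
    (hunit : ‖deriv γ s‖ = 1) : ∀ᶠ t in 𝓝[≠] s, ⟪γ s - γ t, deriv γ t⟫ ≠ 0 := by
  have hderiv := ((hasDerivAt_of_norm_deriv_eq_one hunit).const_sub (γ s)).inner ℝ hγ'.hasDerivAt
  rw [sub_self, inner_zero_left, zero_add, inner_neg_left, real_inner_self_eq_norm_sq, hunit]
    at hderiv
  exact hderiv.eventually_ne (by norm_num)

end InnerProductSpace

local notation "ℝ²" => EuclideanSpace ℝ (Fin 2)

/-- The clockwise quarter turn of the plane. It carries the unit tangent of a positively oriented
closed curve to its outward unit normal. -/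
noncomputable def quarterTurn : ℝ² →L[ℝ] ℝ² :=
  Matrix.toEuclideanCLM (𝕜 := ℝ) !![0, 1; -1, 0]

lemma quarterTurn_apply (v : ℝ²) : quarterTurn v = !₂[v 1, -v 0] := by
  ext i
  fin_cases i <;> simp [quarterTurn, Matrix.mulVec, dotProduct]

lemma quarterTurn_quarterTurn (v : ℝ²) : quarterTurn (quarterTurn v) = -v := by
  ext i
  fin_cases i <;> simp [quarterTurn_apply]

lemma inner_quarterTurn (v w : ℝ²) : ⟪v, quarterTurn w⟫ = v 0 * w 1 - v 1 * w 0 := by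
  simp [quarterTurn_apply, PiLp.inner_apply, Fin.sum_univ_two]
  ring

lemma inner_self_quarterTurn (v : ℝ²) : ⟪v, quarterTurn v⟫ = 0 := by
  rw [inner_quarterTurn]
  ring

lemma norm_quarterTurn (v : ℝ²) : ‖quarterTurn v‖ = ‖v‖ := by
  simp [EuclideanSpace.norm_eq, quarterTurn_apply, Fin.sum_univ_two, add_comm]

lemma eq_inner_quarterTurn_smul {v w : ℝ²} (hv : ‖v‖ = 1) (hvw : ⟪v, w⟫ = 0) :
    w = ⟪w, quarterTurn v⟫ • quarterTurn v := by
  have hv_sq : v 0 ^ 2 + v 1 ^ 2 = 1 := by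
    simpa [Fin.sum_univ_two, hv] using (EuclideanSpace.real_norm_sq_eq v).symm
  have hvw_coord : v 0 * w 0 + v 1 * w 1 = 0 := by
    simpa [PiLp.inner_apply, Fin.sum_univ_two, mul_comm] using hvw
  rw [inner_quarterTurn, quarterTurn_apply]
  ext i
  fin_cases i
  · change w 0 = (w 0 * v 1 - w 1 * v 0) * v 1
    linear_combination (-w 0) * hv_sq + v 0 * hvw_coord
  · change w 1 = (w 0 * v 1 - w 1 * v 0) * -v 0
    linear_combination (-w 1) * hv_sq + v 1 * hvw_coord

/-- The signed curvature `κ = -⟨q'', n⟩` of a unit-speed plane curve, where `n` is the normal to the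
right of `q'`; it is positive for a positively oriented circle. -/
noncomputable def signedCurvature (q : ℝ → ℝ²) (t : ℝ) : ℝ :=
  -⟪deriv (deriv q) t, quarterTurn (deriv q t)⟫

section Curvature

variable {q : ℝ → ℝ²}

lemma continuous_signedCurvature (hq : ContDiff ℝ 2 q) : Continuous (signedCurvature q) := by
  have hq' : ContDiff ℝ 1 (deriv q) := ContDiff.deriv' hq
  exact ((hq'.continuous_deriv le_rfl).inner (quarterTurn.continuous.comp hq'.continuous)).neg

lemma deriv_deriv_eq_neg_signedCurvature_smul {t : ℝ} (hq' : DifferentiableAt ℝ (deriv q) t)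
    (hunit : ∀ x, ‖deriv q x‖ = 1) :
    deriv (deriv q) t = -signedCurvature q t • quarterTurn (deriv q t) := by
  rw [signedCurvature, neg_neg]
  exact eq_inner_quarterTurn_smul (hunit t)
    (inner_deriv_deriv_eq_zero_of_norm_deriv_eq_one hq' hunit)

lemma hasDerivAt_quarterTurn_deriv {t : ℝ} (hq' : DifferentiableAt ℝ (deriv q) t)
    (hunit : ∀ x, ‖deriv q x‖ = 1) :
    HasDerivAt (fun x => quarterTurn (deriv q x)) (signedCurvature q t • deriv q t) t := by
  have hderiv := quarterTurn.hasFDerivAt.comp_hasDerivAt t hq'.hasDerivAt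
  rwa [deriv_deriv_eq_neg_signedCurvature_smul hq' hunit, map_smul, quarterTurn_quarterTurn,
    smul_neg, neg_smul, neg_neg] at hderiv

lemma exists_signedCurvature_ne_zero_of_periodic {L : ℝ} (hL : L ≠ 0)
    (hq' : Differentiable ℝ (deriv q)) (hunit : ∀ t, ‖deriv q t‖ = 1)
    (hper : Function.Periodic q L) : ∃ t, signedCurvature q t ≠ 0 := by
  by_contra! hzero
  have hderiv : deriv q 0 = 0 := deriv_eq_zero_of_periodic_of_deriv_deriv_eq_zero hL
    (fun t => (hasDerivAt_of_norm_deriv_eq_one (hunit t)).differentiableAt) hq'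
    (fun t => by rw [deriv_deriv_eq_neg_signedCurvature_smul (hq' t) hunit, hzero, neg_zero,
      zero_smul]) hper 0
  simpa [hderiv] using hunit 0

lemma exists_norm_sub_eq_of_signedCurvature_eq {κ : ℝ} (hκ : κ ≠ 0)
    (hq' : Differentiable ℝ (deriv q)) (hunit : ∀ t, ‖deriv q t‖ = 1)
    (hcurv : ∀ t, signedCurvature q t = κ) : ∃ c : ℝ², ∀ t, ‖q t - c‖ = |κ|⁻¹ := by
  have hderiv (t : ℝ) : HasDerivAt (fun x => q x - κ⁻¹ • quarterTurn (deriv q x)) 0 t := by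
    have h := (hasDerivAt_of_norm_deriv_eq_one (hunit t)).sub
      ((hasDerivAt_quarterTurn_deriv (hq' t) hunit).const_smul κ⁻¹)
    rwa [hcurv, inv_smul_smul₀ hκ, sub_self] at h
  refine ⟨q 0 - κ⁻¹ • quarterTurn (deriv q 0), fun t => ?_⟩
  rw [is_const_of_deriv_eq_zero (fun x => (hderiv x).differentiableAt)
    (fun x => (hderiv x).deriv) 0 t, sub_sub_cancel, norm_smul, norm_quarterTurn, hunit, mul_one,
    norm_inv, Real.norm_eq_abs]

end Curvature

lemma inner_sub_quarterTurn_deriv_eq_dlKernel_mul (q : ℝ → ℝ²) (s t : ℝ) :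
    ⟪q s - q t, quarterTurn (deriv q t)⟫ = dlKernel q s t * ‖q s - q t‖ ^ 2 := by
  by_cases hst : q s = q t
  · simp [hst]
  · have hnorm : ‖q s - q t‖ ^ 2 ≠ 0 := pow_ne_zero 2 (norm_ne_zero_iff.mpr (sub_ne_zero.mpr hst))
    rw [dlKernel, div_mul_cancel₀ _ hnorm, inner_quarterTurn, PiLp.sub_apply, PiLp.sub_apply]

section Kernel

variable {q : ℝ → ℝ²}

lemma periodic_dlKernel {L : ℝ} (hper : Function.Periodic q L) (s : ℝ) :
    Function.Periodic (dlKernel q s) L := fun t => by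
  simp only [dlKernel, hper t, periodic_deriv hper t]

lemma periodic_of_eq_dlKernel {L s : ℝ} {k : ℝ → ℝ} (hper : Function.Periodic q L)
    (hq' : ∀ t, deriv q t ≠ 0) (hk : Continuous k)
    (hoff : ∀ t, q s ≠ q t → k t = dlKernel q s t) : Function.Periodic k L := by
  refine congrFun ((hk.comp (continuous_add_const L)).ext_on
    (dense_setOf_ne_of_deriv_ne_zero hq' (q s)) hk fun t ht => ?_)
  have hne : q s ≠ q t := Ne.symm ht
  rw [Function.comp_apply, hoff t hne, hoff (t + L) (by rwa [hper t]), periodic_dlKernel hper s t]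

lemma signedCurvature_add_two_mul_mul_inner_eq_zero {p : ℝ²} {a t : ℝ}
    (hq' : DifferentiableAt ℝ (deriv q) t) (hunit : ∀ x, ‖deriv q x‖ = 1)
    (hinner : ∀ x, ⟪p - q x, quarterTurn (deriv q x)⟫ = a * ‖p - q x‖ ^ 2) :
    (signedCurvature q t + 2 * a) * ⟪p - q t, deriv q t⟫ = 0 := by
  have hsub := (hasDerivAt_of_norm_deriv_eq_one (hunit t)).const_sub p
  have hleft := hsub.inner ℝ (hasDerivAt_quarterTurn_deriv hq' hunit)
  simp only [hinner] at hleft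
  have heq := hleft.unique (hsub.norm_sq.const_mul a)
  rw [real_inner_smul_right, inner_neg_left, inner_self_quarterTurn, inner_neg_right] at heq
  linear_combination heq

lemma eventually_signedCurvature_eq_of_dlKernel_eq {s a : ℝ} (hq : ContDiff ℝ 2 q)
    (hunit : ∀ t, ‖deriv q t‖ = 1) (hconst : ∀ t, q s ≠ q t → dlKernel q s t = a) :
    ∀ᶠ t in 𝓝 s, signedCurvature q t = -2 * a := by
  have hq' : Differentiable ℝ (deriv q) := (ContDiff.deriv' hq).differentiable one_ne_zero
  have hinner (t : ℝ) : ⟪q s - q t, quarterTurn (deriv q t)⟫ = a * ‖q s - q t‖ ^ 2 := by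
    by_cases hst : q s = q t
    · simp [hst]
    · rw [inner_sub_quarterTurn_deriv_eq_dlKernel_mul, hconst t hst]
  refine ((continuous_signedCurvature hq).continuousAt.eventuallyEq_nhds_iff_eventuallyEq_nhdsNE
    continuousAt_const).mp ?_
  filter_upwards [eventually_inner_sub_deriv_ne_zero (hq' s) (hunit s)] with t ht
  linarith [(mul_eq_zero.mp
    (signedCurvature_add_two_mul_mul_inner_eq_zero (hq' t) hunit hinner)).resolve_right ht]

lemma signedCurvature_eq_of_dlKernel_eq {a : ℝ → ℝ} (hq : ContDiff ℝ 2 q)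
    (hunit : ∀ t, ‖deriv q t‖ = 1) (hconst : ∀ s t, q s ≠ q t → dlKernel q s t = a s) (s t : ℝ) :
    signedCurvature q s = signedCurvature q t := by
  refine ((IsLocallyConstant.iff_eventually_eq _).mpr fun x => ?_).apply_eq_of_preconnectedSpace s t
  have hnear := eventually_signedCurvature_eq_of_dlKernel_eq hq hunit (hconst x)
  filter_upwards [hnear] with y hy
  rw [hy, hnear.self_of_nhds]

end Kernel

theorem double_layer_annihilates_mean_zero_implies_circle_general
    (L : ℝ) (hL : 0 < L)
    (q : ℝ → EuclideanSpace ℝ (Fin 2))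
    (hq : ContDiff ℝ 2 q)
    (hper : ∀ s, q (s + L) = q s)
    (hunit : ∀ s, ‖deriv q s‖ = 1)
    (ktil : ℝ → ℝ → ℝ)
    (hcont : ∀ s, Continuous (ktil s))
    (hoff : ∀ s t, q s ≠ q t → ktil s t = dlKernel q s t)
    (hK : ∀ ψ : ℝ → ℝ, Continuous ψ → (∀ t, ψ (t + L) = ψ t) →
      (∫ t in (0 : ℝ)..L, ψ t) = 0 → ∀ s : ℝ, (∫ t in (0 : ℝ)..L, ktil s t * ψ t) = 0) :
    ∃ c : EuclideanSpace ℝ (Fin 2), ∃ R : ℝ, 0 < R ∧ ∀ s : ℝ, ‖q s - c‖ = R := by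
  have hq' : Differentiable ℝ (deriv q) := (ContDiff.deriv' hq).differentiable one_ne_zero
  have hq'_ne (t : ℝ) : deriv q t ≠ 0 := norm_ne_zero_iff.mp (hunit t ▸ one_ne_zero)
  have hkernel (s t : ℝ) : ktil s t = ktil s 0 :=
    eq_of_periodic_of_forall_integral_mul_eq_zero hL (hcont s)
      (periodic_of_eq_dlKernel hper hq'_ne (hcont s) (hoff s))
      (fun ψ hψ hψper hψmean => hK ψ hψ hψper hψmean s) t 0
  have hcurv : ∀ s t, signedCurvature q s = signedCurvature q t :=
    signedCurvature_eq_of_dlKernel_eq hq hunit fun s t hst => by rw [← hoff s t hst, hkernel s t]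
  obtain ⟨t₀, hκ⟩ := exists_signedCurvature_ne_zero_of_periodic hL.ne' hq' hunit hper
  obtain ⟨c, hc⟩ := exists_norm_sub_eq_of_signedCurvature_eq hκ hq' hunit fun t => hcurv t t₀
  exact ⟨c, |signedCurvature q t₀|⁻¹, inv_pos.mpr (abs_pos.mpr hκ), hc⟩

/-- If the double layer potential annihilates all mean-zero continuous periodic functions,
then the boundary curve is a circle. -/
theorem double_layer_annihilates_mean_zero_implies_circle
    (L : ℝ) (hL : 0 < L)
    (q : ℝ → EuclideanSpace ℝ (Fin 2))
    (hq : ContDiff ℝ 2 q)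
    (hper : ∀ s, q (s + L) = q s)
    (hunit : ∀ s, ‖deriv q s‖ = 1)
    (hinj : Set.InjOn q (Set.Ico 0 L))
    (horient : (∫ t in (0:ℝ)..L,
      (deriv (deriv q) t 1 * deriv q t 0 - deriv (deriv q) t 0 * deriv q t 1)) = 2 * π)
    (ktil : ℝ → ℝ → ℝ)
    (hcont : Continuous (fun p : ℝ × ℝ => ktil p.1 p.2))
    (hoff : ∀ s t, q s ≠ q t → ktil s t = dlKernel q s t)
    (hdiag : ∀ t, ktil t t = dlDiag q t)
    (hK : ∀ ψ : ℝ → ℝ, Continuous ψ → (∀ t, ψ (t + L) = ψ t) →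
      (∫ t in (0:ℝ)..L, ψ t) = 0 → ∀ s : ℝ, (∫ t in (0:ℝ)..L, ktil s t * ψ t) = 0) :
    ∃ c : EuclideanSpace ℝ (Fin 2), ∃ R : ℝ, 0 < R ∧ ∀ s : ℝ, ‖q s - c‖ = R := by
  exact double_layer_annihilates_mean_zero_implies_circle_general L hL q hq hper hunit ktil
    (fun s => hcont.comp (.prodMk_right s)) hoff hK
end

section
/- A closed unit-speed plane curve of constant curvature is a circle: if q : ℝ → ℝ² is an L-periodic, unit-speed, twice continuously differentiable simple closed curve with outward unit normal n(s) = (q'(s)₂, −q'(s)₁), and there is a constant c ∈ ℝ with ⟨q''(s), n(s)⟩ = c for all s, then there exist a point c₀ ∈ ℝ² and a radius R > 0 such that ‖q(s) − c₀‖ = R for all s ∈ ℝ. -/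
open Real Filter Topology MeasureTheory intervalIntegral

/-!
The signed curvature of a unit-speed curve in an oriented plane, with velocity `q'` and
acceleration `q''`, is `o.areaForm (q' s) (q'' s)`. If it is a constant `κ`, then `q'' = κ J q'`,
where `J` is rotation by a right angle. If `κ = 0`, then `q'` is constant, so `q` runs injectively
along a line. If `κ ≠ 0`, then the center of curvature `q + κ⁻¹ J q'` has derivative
`q' + J (J q') = 0`, so it is a fixed point at distance `|κ|⁻¹` from `q`.
-/

open scoped RealInnerProductSpace

section Derivatives

theorem inner_eq_zero_of_norm_eq_const {F : Type*} [NormedAddCommGroup F] [InnerProductSpace ℝ F]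
    {v : ℝ → F} {a : F} {r s : ℝ} (hv : HasDerivAt v a s) (hnorm : ∀ t, ‖v t‖ = r) :
    ⟪v s, a⟫ = 0 := by
  have hconst : HasDerivAt (‖v ·‖ ^ 2) 0 s := by
    simp only [hnorm]
    exact hasDerivAt_const s _
  simpa using hv.norm_sq.unique hconst

variable {F : Type*} [NormedAddCommGroup F] [NormedSpace ℝ F] {f : ℝ → F}

theorem eq_of_hasDerivAt_zero (hf : ∀ s, HasDerivAt f 0 s) (s t : ℝ) : f s = f t :=
  is_const_of_deriv_eq_zero (fun s => (hf s).differentiableAt) (fun s => (hf s).deriv) s t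

theorem injective_of_hasDerivAt_const {v : F} (hf : ∀ s, HasDerivAt f v s) (hv : v ≠ 0) :
    Function.Injective f := by
  intro s t hst
  have haffine : f s - s • v = f t - t • v := by
    refine eq_of_hasDerivAt_zero (f := fun t => f t - t • v) (fun t => ?_) s t
    simpa using (hf t).fun_sub ((hasDerivAt_id' t).smul_const v)
  rw [hst, sub_right_inj] at haffine
  exact smul_left_injective ℝ hv haffine

theorem injective_of_hasDerivAt_of_hasDerivAt_zero {f' : ℝ → F} (hf : ∀ s, HasDerivAt f (f' s) s)
    (hf' : ∀ s, HasDerivAt f' 0 s) (hne : f' 0 ≠ 0) : Function.Injective f :=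
  injective_of_hasDerivAt_const (fun s => eq_of_hasDerivAt_zero hf' s 0 ▸ hf s) hne

end Derivatives

section OrientedPlane

variable {E : Type*} [NormedAddCommGroup E] [InnerProductSpace ℝ E]
  [Fact (Module.finrank ℝ E = 2)] (o : Orientation ℝ E (Fin 2))

theorem areaForm_eq_repr (b : OrthonormalBasis (Fin 2) ℝ E) (hb : b.toBasis.orientation = o)
    (x y : E) : o.areaForm x y = b.repr x 0 * b.repr y 1 - b.repr x 1 * b.repr y 0 := by
  rw [o.areaForm_to_volumeForm, o.volumeForm_robust b hb, Module.Basis.det_apply,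
    Matrix.det_fin_two]
  simp only [Module.Basis.toMatrix_apply, OrthonormalBasis.coe_toBasis_repr_apply,
    Matrix.cons_val_zero, Matrix.cons_val_one]
  ring

theorem norm_sq_smul_eq_inner_smul_add_areaForm_smul (u v : E) :
    ‖u‖ ^ 2 • v = ⟪u, v⟫ • u + o.areaForm u v • o.rightAngleRotation u := by
  refine ext_inner_right ℝ fun y => ?_
  simp only [inner_add_left, real_inner_smul_left, o.inner_rightAngleRotation_left,
    o.inner_mul_inner_add_areaForm_mul_areaForm]

theorem eq_areaForm_smul_rightAngleRotation_of_norm_eq_one {v : ℝ → E} {a : E} {s : ℝ}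
    (hv : HasDerivAt v a s) (hunit : ∀ t, ‖v t‖ = 1) :
    a = o.areaForm (v s) a • o.rightAngleRotation (v s) := by
  simpa [hunit s, inner_eq_zero_of_norm_eq_const hv hunit] using
    norm_sq_smul_eq_inner_smul_add_areaForm_smul o (v s) a

/-- The center of the osculating circle, of signed curvature `κ`, of a curve passing through `p`
with unit velocity `v`. For `κ = 0`, where there is no such circle, the value is `p`. -/
noncomputable def centerOfCurvature (κ : ℝ) (p v : E) : E :=
  p + κ⁻¹ • o.rightAngleRotation v

theorem norm_sub_centerOfCurvature (κ : ℝ) (p : E) {v : E} (hv : ‖v‖ = 1) :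
    ‖p - centerOfCurvature o κ p v‖ = |κ|⁻¹ := by
  simp [centerOfCurvature, norm_smul, hv]

variable {q q' : ℝ → E} {κ : ℝ}

theorem hasDerivAt_centerOfCurvature {s : ℝ} (hκ : κ ≠ 0)
    (hq : HasDerivAt q (q' s) s) (hq' : HasDerivAt q' (κ • o.rightAngleRotation (q' s)) s) :
    HasDerivAt (fun t => centerOfCurvature o κ (q t) (q' t)) 0 s := by
  have hJ : HasDerivAt (fun t => o.rightAngleRotation (q' t))
      (o.rightAngleRotation (κ • o.rightAngleRotation (q' s))) s :=
    o.rightAngleRotation.hasFDerivAt.comp_hasDerivAt s hq'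
  simpa [centerOfCurvature, hκ] using hq.fun_add (hJ.fun_const_smul κ⁻¹)

theorem norm_sub_centerOfCurvature_eq_of_hasDerivAt (hκ : κ ≠ 0)
    (hq : ∀ s, HasDerivAt q (q' s) s)
    (hq' : ∀ s, HasDerivAt q' (κ • o.rightAngleRotation (q' s)) s) (hunit : ∀ s, ‖q' s‖ = 1)
    (s t : ℝ) : ‖q s - centerOfCurvature o κ (q t) (q' t)‖ = |κ|⁻¹ := by
  have hcenter : centerOfCurvature o κ (q t) (q' t) = centerOfCurvature o κ (q s) (q' s) :=
    eq_of_hasDerivAt_zero (fun r => hasDerivAt_centerOfCurvature o hκ (hq r) (hq' r)) t s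
  rw [hcenter, norm_sub_centerOfCurvature o κ (q s) (hunit s)]

theorem closed_curve_constant_curvature_is_circle_general {q'' : ℝ → E}
    (hq : ∀ s, HasDerivAt q (q' s) s) (hq' : ∀ s, HasDerivAt q' (q'' s) s)
    (hunit : ∀ s, ‖q' s‖ = 1) (hcurv : ∀ s, o.areaForm (q' s) (q'' s) = κ)
    (hninj : ¬ Function.Injective q) :
    ∃ c₀ : E, ∃ R : ℝ, 0 < R ∧ ∀ s, ‖q s - c₀‖ = R := by
  have hfrenet (s : ℝ) : HasDerivAt q' (κ • o.rightAngleRotation (q' s)) s := by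
    rw [← hcurv s, ← eq_areaForm_smul_rightAngleRotation_of_norm_eq_one o (hq' s) hunit]
    exact hq' s
  have hκ : κ ≠ 0 := by
    rintro rfl
    have hne : q' 0 ≠ 0 := ne_zero_of_norm_ne_zero (by simp [hunit])
    exact hninj
      (injective_of_hasDerivAt_of_hasDerivAt_zero hq (fun s => by simpa using hfrenet s) hne)
  exact ⟨centerOfCurvature o κ (q 0) (q' 0), |κ|⁻¹, by positivity,
    fun s => norm_sub_centerOfCurvature_eq_of_hasDerivAt o hκ hq hfrenet hunit s 0⟩

end OrientedPlane

/-- A closed unit-speed plane curve of constant curvature is a circle: if `q` is an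
`L`-periodic, unit-speed, `C²` simple closed curve with outward unit normal
`n(s) = (q'(s)₂, −q'(s)₁)` and `⟨q''(s), n(s)⟩ = c` for all `s`, then the image of `q`
lies on a circle. -/
theorem closed_curve_constant_curvature_is_circle
    (L : ℝ) (hL : 0 < L)
    (q : ℝ → EuclideanSpace ℝ (Fin 2))
    (hq : ContDiff ℝ 2 q)
    (hper : ∀ s, q (s + L) = q s)
    (hunit : ∀ s, ‖deriv q s‖ = 1)
    (hinj : Set.InjOn q (Set.Ico 0 L))
    (c : ℝ)
    (hcurv : ∀ s : ℝ,
      deriv (deriv q) s 0 * deriv q s 1 - deriv (deriv q) s 1 * deriv q s 0 = c) :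
    ∃ c₀ : EuclideanSpace ℝ (Fin 2), ∃ R : ℝ, 0 < R ∧ ∀ s : ℝ, ‖q s - c₀‖ = R := by
  let b := EuclideanSpace.basisFun (Fin 2) ℝ
  have : Fact (Module.finrank ℝ (EuclideanSpace ℝ (Fin 2)) = 2) := ⟨finrank_euclideanSpace_fin⟩
  have hcurv' (s : ℝ) :
      b.toBasis.orientation.areaForm (deriv q s) (deriv (deriv q) s) = -c := by
    rw [areaForm_eq_repr _ b rfl, ← hcurv s]
    simp only [b, EuclideanSpace.basisFun_repr]
    ring
  exact closed_curve_constant_curvature_is_circle_general b.toBasis.orientation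
    (fun s => (hq.differentiable two_ne_zero s).hasDerivAt)
    (fun s => (hq.differentiable_deriv_two s).hasDerivAt) hunit hcurv'
    (Function.Periodic.not_injective hper hL.ne')
end

section
/- Let R > 0, c ∈ ℝ², L = 2πR and q(s) = c + R·(cos(s/R), sin(s/R)) parametrize the circle of radius R. For every closed subset A of the circle {x : ‖x − c‖ = R} with A ≠ the whole circle, there exists a continuous L-periodic function e : ℝ → ℝ, not identically zero, such that ∫₀^L e(t) dt = 0, e(s) = 0 whenever q(s) ∈ A, and (1/π) ∫₀^L k(s,t) e(t) dt = 0 for all s; that is, e is a nonzero eigenfunction of the double layer potential with eigenvalue 0 whose nodal set contains A. -/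
open Real Filter Topology MeasureTheory intervalIntegral

/-!
On a circle the double layer kernel is constant off the diagonal, so the double layer potential of
`e` is a multiple of its mean. It therefore suffices to find a nonzero mean-zero function vanishing
on `A`. Take a continuous function on the plane that vanishes on `A` and is not constant along the
circle; the polynomials of degree at most two without constant term form a plane, so some nonzero
one of them, composed with this function, has mean zero. The composition is not identically zero
because a nonconstant continuous function on a connected space takes infinitely many values, of
which the polynomial annihilates only finitely many.
-/

section MeanZero

open scoped Polynomial

theorem exists_eval_apply_ne_zero_of_continuous {X R : Type*} [TopologicalSpace X]
    [PreconnectedSpace X] [CommRing R] [IsDomain R] [TopologicalSpace R] [T1Space R] {f : X → R}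
    (hf : Continuous f) {x y : X} (hxy : f x ≠ f y) {p : R[X]} (hp : p ≠ 0) :
    ∃ z, p.eval (f z) ≠ 0 := by
  have hrange : (Set.range f).Infinite :=
    (isPreconnected_range hf).infinite_of_nontrivial
      ⟨f x, Set.mem_range_self x, f y, Set.mem_range_self y, hxy⟩
  by_contra! h
  exact hp (p.eq_zero_of_infinite_isRoot (hrange.mono (Set.range_subset_iff.2 h)))

theorem exists_polynomial_integral_eval_eq_zero {α : Type*} [MeasurableSpace α] {μ : Measure α}
    {f : α → ℝ} (hf : Integrable f μ) (hf_sq : Integrable (fun x => f x ^ 2) μ) :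
    ∃ p : ℝ[X], p ≠ 0 ∧ p.eval 0 = 0 ∧ ∫ x, p.eval (f x) ∂μ = 0 := by
  by_cases hmean : ∫ x, f x ∂μ = 0
  · exact ⟨.X, Polynomial.X_ne_zero, Polynomial.eval_X, by simpa using hmean⟩
  · refine ⟨.C (∫ x, f x ∂μ) * .X ^ 2 - .C (∫ x, f x ^ 2 ∂μ) * .X, fun h => hmean ?_, by simp, ?_⟩
    · simpa [Polynomial.coeff_X] using congrArg (Polynomial.coeff · 2) h
    · simp only [Polynomial.eval_sub, Polynomial.eval_mul, Polynomial.eval_C,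
        Polynomial.eval_pow, Polynomial.eval_X]
      rw [integral_sub (hf_sq.const_mul _) (hf.const_mul _), MeasureTheory.integral_const_mul,
        MeasureTheory.integral_const_mul, mul_comm, sub_self]

theorem exists_continuousMap_integral_comp_eq_zero_of_isClosed {X Y : Type*} [TopologicalSpace X]
    [PreconnectedSpace X] [MeasurableSpace X] [OpensMeasurableSpace X] [TopologicalSpace Y]
    [T4Space Y] (μ : Measure X) [IsFiniteMeasure μ] {γ : X → Y} (hγ : Continuous γ) {A : Set Y}
    (hA : IsClosed A) {x y : X} (hx : γ x ∉ A) (hxy : γ x ≠ γ y) :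
    ∃ g : C(Y, ℝ), Set.EqOn g 0 A ∧ (∃ z, g (γ z) ≠ 0) ∧ ∫ z, g (γ z) ∂μ = 0 := by
  obtain ⟨f, hf_zero, hf_one, hf_mem⟩ :=
    exists_continuous_zero_one_of_isClosed (hA.union (isClosed_singleton (x := γ y)))
      (isClosed_singleton (x := γ x)) (by simp [hx, hxy])
  have hfγ_cont : Continuous fun z => f (γ z) := by fun_prop
  have hfγ_ne : f (γ x) ≠ f (γ y) := by
    simp [hf_one (Set.mem_singleton _), hf_zero (Or.inr (Set.mem_singleton _))]
  have hf_norm_le (z : X) : ‖f (γ z)‖ ≤ 1 := by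
    rw [Real.norm_of_nonneg (hf_mem _).1]
    exact (hf_mem _).2
  obtain ⟨p, hp, hp_zero, hp_int⟩ := exists_polynomial_integral_eval_eq_zero (μ := μ)
    (.of_bound hfγ_cont.aestronglyMeasurable 1 (.of_forall hf_norm_le))
    (.of_bound (hfγ_cont.pow 2).aestronglyMeasurable 1 (.of_forall fun z => by
      simpa using hf_norm_le z))
  refine ⟨⟨fun w => p.eval (f w), by fun_prop⟩, fun w hw => ?_,
    exists_eval_apply_ne_zero_of_continuous hfγ_cont hfγ_ne hp, hp_int⟩
  simpa [hf_zero (Or.inl hw)] using hp_zero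

end MeanZero

theorem real_inner_sub_self_of_norm_eq {E : Type*} [NormedAddCommGroup E] [InnerProductSpace ℝ E]
    {x y : E} (h : ‖x‖ = ‖y‖) : inner ℝ (x - y) y = -(‖x - y‖ ^ 2 / 2) := by
  rw [norm_sub_sq_real, inner_sub_left, real_inner_self_eq_norm_sq, h]
  ring

/-- The parametrization `s ↦ c + R (cos (s / R), sin (s / R))` of the circle with centre `c` and
radius `R` by arc length, obtained from `circleMap` through the isometry `ℂ ≃ ℝ²`. For `R = 0` it
is the constant `c`. -/
noncomputable def circleParam (c : EuclideanSpace ℝ (Fin 2)) (R s : ℝ) : EuclideanSpace ℝ (Fin 2) :=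
  Complex.orthonormalBasisOneI.repr
    (circleMap (Complex.orthonormalBasisOneI.repr.symm c) R (s / R))

section CircleParam

variable (c : EuclideanSpace ℝ (Fin 2)) {R : ℝ}

@[simp]
theorem circleParam_apply_zero (R s : ℝ) : circleParam c R s 0 = c 0 + R * cos (s / R) := by
  simp [circleParam, circleMap, -Complex.ofReal_div, Complex.exp_ofReal_mul_I_re,
    Complex.exp_ofReal_mul_I_im]

@[simp]
theorem circleParam_apply_one (R s : ℝ) : circleParam c R s 1 = c 1 + R * sin (s / R) := by
  simp [circleParam, circleMap, -Complex.ofReal_div, Complex.exp_ofReal_mul_I_re,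
    Complex.exp_ofReal_mul_I_im]

theorem continuous_circleParam (R : ℝ) : Continuous (circleParam c R) := by
  unfold circleParam
  fun_prop

theorem periodic_circleParam (hR : R ≠ 0) : Function.Periodic (circleParam c R) (2 * π * R) := by
  intro s
  simp only [circleParam, add_div, mul_div_cancel_right₀ _ hR, periodic_circleMap _ _ _]

theorem range_circleParam (hR : R ≠ 0) : Set.range (circleParam c R) = Metric.sphere c |R| := by
  have hdiv : Function.Surjective fun s : ℝ => s / R := fun θ => ⟨θ * R, mul_div_cancel_right₀ θ hR⟩
  have hcomp : circleParam c R = Complex.orthonormalBasisOneI.repr ∘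
    circleMap (Complex.orthonormalBasisOneI.repr.symm c) R ∘ fun s => s / R := rfl
  rw [hcomp, Set.range_comp, hdiv.range_comp, range_circleMap, LinearIsometryEquiv.image_sphere,
    LinearIsometryEquiv.apply_symm_apply]

theorem norm_circleParam_sub_center (hR : R ≠ 0) (s : ℝ) : ‖circleParam c R s - c‖ = |R| := by
  rw [← mem_sphere_iff_norm, ← range_circleParam c hR]
  exact Set.mem_range_self s

theorem countable_setOf_circleParam_eq (hR : R ≠ 0) (x : EuclideanSpace ℝ (Fin 2)) :
    {s | circleParam c R s = x}.Countable :=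
  (((Set.countable_singleton x).preimage Complex.orthonormalBasisOneI.repr.injective
    ).preimage_circleMap _ hR).preimage fun _ _ => (div_left_inj' hR).1

theorem hasDerivAt_circleParam (hR : R ≠ 0) (s : ℝ) :
    HasDerivAt (circleParam c R) !₂[-sin (s / R), cos (s / R)] s := by
  have h := Complex.orthonormalBasisOneI.repr.toContinuousLinearEquiv.hasFDerivAt.comp_hasDerivAt s
    ((hasDerivAt_circleMap (Complex.orthonormalBasisOneI.repr.symm c) R (s / R)).scomp s
      ((hasDerivAt_id s).div_const R))
  refine h.congr_deriv ?_
  ext i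
  fin_cases i <;> simp [circleMap_zero_re, circleMap_zero_im, hR]

theorem dlKernel_circleParam (hR : R ≠ 0) {s t : ℝ} (hst : circleParam c R s ≠ circleParam c R t) :
    dlKernel (circleParam c R) s t = -(1 / (2 * R)) := by
  let x := circleParam c R s - c
  let y := circleParam c R t - c
  have hsub : circleParam c R s - circleParam c R t = x - y := (sub_sub_sub_cancel_right ..).symm
  have hinner : inner ℝ (x - y) y = -(‖x - y‖ ^ 2 / 2) := real_inner_sub_self_of_norm_eq <| by
    rw [norm_circleParam_sub_center c hR, norm_circleParam_sub_center c hR]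
  -- The outward normal at `t` is `y / R`.
  have hderiv_one : deriv (circleParam c R) t 1 = y 0 / R := by
    simp [(hasDerivAt_circleParam c hR t).deriv, y, hR]
  have hderiv_zero : deriv (circleParam c R) t 0 = -(y 1 / R) := by
    simp [(hasDerivAt_circleParam c hR t).deriv, y, hR]
  have hnum : (circleParam c R s 0 - circleParam c R t 0) * deriv (circleParam c R) t 1 -
      (circleParam c R s 1 - circleParam c R t 1) * deriv (circleParam c R) t 0 =
      inner ℝ (x - y) y / R := by
    rw [hderiv_one, hderiv_zero, ← PiLp.sub_apply, ← PiLp.sub_apply, hsub,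
      PiLp.inner_apply, Fin.sum_univ_two, RCLike.inner_apply', RCLike.inner_apply']
    simp only [conj_trivial]
    ring
  have hnorm : ‖x - y‖ ≠ 0 := norm_ne_zero_iff.2 (hsub ▸ sub_ne_zero.2 hst)
  rw [dlKernel, hnum, hinner, hsub]
  field_simp

theorem integral_mul_eq_of_eq_dlKernel_circleParam (hR : R ≠ 0) {k : ℝ → ℝ} {s : ℝ}
    (hk : ∀ t, circleParam c R s ≠ circleParam c R t → k t = dlKernel (circleParam c R) s t)
    (ψ : ℝ → ℝ) (a b : ℝ) :
    ∫ t in a..b, k t * ψ t = -(1 / (2 * R)) * ∫ t in a..b, ψ t := by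
  rw [← intervalIntegral.integral_const_mul]
  refine integral_congr_ae ?_
  filter_upwards [(countable_setOf_circleParam_eq c hR (circleParam c R s)).ae_notMem volume]
    with t ht _
  rw [hk t (Ne.symm ht), dlKernel_circleParam c hR (Ne.symm ht)]

end CircleParam

/-- On the circle, for every proper closed subset `A` of the circle there is a nonzero
continuous mean-zero eigenfunction of the double layer potential with eigenvalue `0`
whose nodal set contains `A`. -/
theorem circle_eigenfunction_vanishing_on_closed_set
    (R : ℝ) (hR : 0 < R) (c : EuclideanSpace ℝ (Fin 2)) (L : ℝ) (hL : L = 2 * π * R)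
    (q : ℝ → EuclideanSpace ℝ (Fin 2))
    (hq0 : ∀ s : ℝ, q s 0 = c 0 + R * Real.cos (s / R))
    (hq1 : ∀ s : ℝ, q s 1 = c 1 + R * Real.sin (s / R))
    (ktil : ℝ → ℝ → ℝ)
    (hcont : Continuous (fun p : ℝ × ℝ => ktil p.1 p.2))
    (hoff : ∀ s t, q s ≠ q t → ktil s t = dlKernel q s t)
    (hdiag : ∀ t, ktil t t = dlDiag q t)
    (A : Set (EuclideanSpace ℝ (Fin 2)))
    (hAclosed : IsClosed A)
    (hAsub : A ⊆ Metric.sphere c R)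
    (hAne : A ≠ Metric.sphere c R) :
    ∃ e : ℝ → ℝ, Continuous e ∧ (∀ t, e (t + L) = e t) ∧ (∃ s, e s ≠ 0) ∧
      (∫ t in (0:ℝ)..L, e t) = 0 ∧
      (∀ s : ℝ, q s ∈ A → e s = 0) ∧
      (∀ s : ℝ, ((1 / π) * ∫ t in (0:ℝ)..L, ktil s t * e t) = 0) := by
  have hR₀ : R ≠ 0 := hR.ne'
  obtain rfl : q = circleParam c R := by
    ext s i
    fin_cases i <;> simp [hq0, hq1]
  subst hL
  obtain ⟨x, hx, hxA⟩ := Set.exists_of_ssubset (hAsub.ssubset_of_ne hAne)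
  rw [← abs_of_pos hR, ← range_circleParam c hR₀] at hx
  obtain ⟨u, rfl⟩ := hx
  obtain ⟨v, hv⟩ : ∃ v, circleParam c R v ≠ circleParam c R u :=
    ((countable_setOf_circleParam_eq c hR₀ (circleParam c R u)).dense_compl ℝ).nonempty
  obtain ⟨g, hgA, hg_ne, hg_int⟩ := exists_continuousMap_integral_comp_eq_zero_of_isClosed
    (volume.restrict (Set.Ioc 0 (2 * π * R))) (continuous_circleParam c R) hAclosed hxA hv.symm
  rw [← integral_of_le (by positivity)] at hg_int
  refine ⟨fun t => g (circleParam c R t), g.continuous.comp (continuous_circleParam c R),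
    (periodic_circleParam c hR₀).comp g, hg_ne, hg_int, fun s hs => hgA hs, fun s => ?_⟩
  rw [integral_mul_eq_of_eq_dlKernel_circleParam c hR₀ (hoff s), hg_int, mul_zero, mul_zero]
end
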